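/- For every integer m ≥ 2 and every real p > 1 there exists a constant C = C(p,m), independent of N, such that for every integer N ≥ 1 and every f : G → ℂ, the distant spherical maximal function M^D f(x) = max over integers 0 ≤ k ≤ N/(m+1) of |(σ_{N−k} * f)(x)| satisfies ‖M^D f‖_{L^p(G)} ≤ C · ‖f‖_{L^p(G)}. -/

import Mathlib

open Finset

noncomputable section

/-- Hamming weight on `(ℤ/(m+1)ℤ)^N`. -/
def hw {m N : ℕ} (y : Fin N → ZMod (m + 1)) : ℕ :=
  (Finset.univ.filter fun i => y i ≠ 0).card

/-- `L¹`-normalized indicator of the sphere of radius `r` (zero if `r < 0` or `r > N`). -/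
def sigmaC (m N : ℕ) (r : ℤ) : (Fin N → ZMod (m + 1)) → ℂ := fun x =>
  if (hw x : ℤ) = r then
    ((Finset.univ.filter fun y : Fin N → ZMod (m + 1) => (hw y : ℤ) = r).card : ℂ)⁻¹
  else 0

/-- Convolution on `(ℤ/(m+1)ℤ)^N`. -/
def convC {m N : ℕ} (g f : (Fin N → ZMod (m + 1)) → ℂ) : (Fin N → ZMod (m + 1)) → ℂ :=
  fun x => ∑ y, g y * f (x - y)

/-- The distant spherical maximal function `M^D f (x) = max_{0 ≤ k ≤ N/(m+1)} |(σ_{N-k} * f)(x)|`.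
The integers `k` with `0 ≤ k ≤ N/(m+1)` are exactly those with `k ≤ ⌊N/(m+1)⌋`
(natural division). -/
def distantMax (m N : ℕ) (f : (Fin N → ZMod (m + 1)) → ℂ) (x : Fin N → ZMod (m + 1)) : ℝ :=
  (Finset.range (N / (m + 1) + 1)).sup' Finset.nonempty_range_add_one fun k =>
    ‖convC (sigmaC m N ((N : ℤ) - k)) f x‖

/-! Doob part -/

/-- conditional expectation onto coordinates in `S` -/
def cE {m N : ℕ} (S : Finset (Fin N)) (f : (Fin N → ZMod (m + 1)) → ℝ)
    (x : Fin N → ZMod (m + 1)) : ℝ :=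
  (((m : ℝ) + 1) ^ N)⁻¹ * ∑ y : Fin N → ZMod (m + 1), f (S.piecewise x y)

lemma card_G (m N : ℕ) : (Fintype.card (Fin N → ZMod (m + 1)) : ℝ) = ((m : ℝ) + 1) ^ N := by
  simp [ZMod.card]

lemma swap_sum {m N : ℕ} (S : Finset (Fin N))
    (F : (Fin N → ZMod (m + 1)) → (Fin N → ZMod (m + 1)) → ℝ) :
    ∑ x, ∑ y, F x y = ∑ x, ∑ y, F (S.piecewise x y) (S.piecewise y x) := by
  rw [← Fintype.sum_prod_type', ← Fintype.sum_prod_type']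
  have hinv : ∀ p : (Fin N → ZMod (m + 1)) × (Fin N → ZMod (m + 1)),
      (fun p : (Fin N → ZMod (m + 1)) × (Fin N → ZMod (m + 1)) =>
        (S.piecewise p.1 p.2, S.piecewise p.2 p.1))
      ((fun p : (Fin N → ZMod (m + 1)) × (Fin N → ZMod (m + 1)) =>
        (S.piecewise p.1 p.2, S.piecewise p.2 p.1)) p) = p := by
    rintro ⟨x, y⟩
    ext i <;> by_cases hi : i ∈ S <;> simp [hi, Finset.piecewise]
  exact (Equiv.sum_comp (Function.Involutive.toPerm (fun p : (Fin N → ZMod (m + 1)) ×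
      (Fin N → ZMod (m + 1)) => (S.piecewise p.1 p.2, S.piecewise p.2 p.1)) hinv)
    (fun p : (Fin N → ZMod (m + 1)) × (Fin N → ZMod (m + 1)) => F p.1 p.2)).symm

def depOn {m N : ℕ} (S : Finset (Fin N)) (g : (Fin N → ZMod (m + 1)) → ℝ) : Prop :=
  ∀ x y, (∀ i ∈ S, x i = y i) → g x = g y

lemma cE_dep {m N : ℕ} (S : Finset (Fin N)) (f : (Fin N → ZMod (m + 1)) → ℝ) :
    depOn S (cE S f) := by
  intro x y h
  unfold cE
  congr 1
  refine Finset.sum_congr rfl fun z _ => ?_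
  congr 1
  ext i
  by_cases hi : i ∈ S <;> simp [hi, Finset.piecewise, h]

lemma cE_nonneg {m N : ℕ} (S : Finset (Fin N)) (f : (Fin N → ZMod (m + 1)) → ℝ)
    (hf : ∀ x, 0 ≤ f x) (x) : 0 ≤ cE S f x := by
  unfold cE
  exact mul_nonneg (by positivity) (Finset.sum_nonneg fun _ _ => hf _)

lemma cE_sum {m N : ℕ} (S : Finset (Fin N)) (f g : (Fin N → ZMod (m + 1)) → ℝ)
    (hg : depOn S g) : ∑ x, g x * cE S f x = ∑ x, g x * f x := by
  unfold cE
  have h1 : ∑ x, ∑ y, g x * f (S.piecewise x y) = ∑ x : Fin N → ZMod (m + 1),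
      ∑ _y : Fin N → ZMod (m + 1), g x * f x := by
    rw [swap_sum S fun x _ => g x * f x]
    refine Finset.sum_congr rfl fun x _ => Finset.sum_congr rfl fun y _ => ?_
    rw [hg (S.piecewise x y) x]
    intro i hi
    simp [hi]
  simp only [Finset.sum_const, nsmul_eq_mul, Finset.card_univ, card_G] at h1
  rw [← Finset.mul_sum] at h1
  have h0 : ((m : ℝ) + 1) ^ N ≠ 0 := by positivity
  calc _ = (((m : ℝ) + 1) ^ N)⁻¹ * ∑ x, ∑ y, g x * f (S.piecewise x y) := by
        rw [Finset.mul_sum]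
        refine Finset.sum_congr rfl fun x _ => ?_
        rw [← Finset.mul_sum]; ring
    _ = _ := by rw [h1]; field_simp

/-- running maximum -/
def dMax {m N : ℕ} (S : ℕ → Finset (Fin N)) (f : (Fin N → ZMod (m + 1)) → ℝ) :
    ℕ → (Fin N → ZMod (m + 1)) → ℝ
  | 0 => cE (S 0) f
  | n + 1 => fun x => max (dMax S f n x) (cE (S (n + 1)) f x)

lemma dMax_nonneg {m N : ℕ} (S : ℕ → Finset (Fin N)) (f : (Fin N → ZMod (m + 1)) → ℝ)
    (hf : ∀ x, 0 ≤ f x) (n : ℕ) (x) : 0 ≤ dMax S f n x := by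
  induction n with
  | zero => exact cE_nonneg _ _ hf _
  | succ n ih => exact le_trans ih (le_max_left _ _)

lemma cE_le_dMax {m N : ℕ} (S : ℕ → Finset (Fin N)) (f : (Fin N → ZMod (m + 1)) → ℝ)
    (n l : ℕ) (h : l ≤ n) (x) : cE (S l) f x ≤ dMax S f n x := by
  induction n with
  | zero => obtain rfl : l = 0 := by omega
            exact le_rfl
  | succ n ih =>
    rcases Nat.lt_or_ge n l with h1 | h1
    · obtain rfl : l = n + 1 := by omega
      exact le_max_right _ _
    · exact le_trans (ih h1) (le_max_left _ _)

lemma dMax_dep {m N : ℕ} (S : ℕ → Finset (Fin N)) (hS : Monotone S)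
    (f : (Fin N → ZMod (m + 1)) → ℝ) (n : ℕ) : depOn (S n) (dMax S f n) := by
  induction n with
  | zero => exact cE_dep _ _
  | succ n ih =>
    intro x y h
    simp only [dMax]
    rw [ih x y fun i hi => h i (hS (Nat.le_succ n) hi), cE_dep _ _ x y h]

lemma young' {p : ℝ} (hp : 1 < p) {y b : ℝ} (hy : 0 ≤ y) (hb : 0 ≤ b) :
    p * (y ^ (p - 1) * b) ≤ (p - 1) * y ^ p + b ^ p := by
  have hpq := (Real.HolderConjugate.conjExponent hp).symm
  have := Real.young_inequality_of_nonneg (Real.rpow_nonneg hy (p - 1)) hb hpq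
  rw [← Real.rpow_mul hy, Real.conjExponent] at this
  have hp1 : p - 1 ≠ 0 := by linarith
  have hp0 : 0 < p := by linarith
  rw [show (p - 1) * (p / (p - 1)) = p by field_simp] at this
  calc p * (y ^ (p - 1) * b) ≤ p * (y ^ p / (p / (p - 1)) + b ^ p / p) := by gcongr
    _ = _ := by field_simp

lemma doob_aux {m N : ℕ} (S : ℕ → Finset (Fin N)) (hS : Monotone S)
    (f : (Fin N → ZMod (m + 1)) → ℝ) (hf : ∀ x, 0 ≤ f x) {p : ℝ} (hp : 1 < p) (n : ℕ) :
    ∑ x, (dMax S f n x ^ p - p / (p - 1) * (dMax S f n x ^ (p - 1) * f x)) ≤ 0 := by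
  have key : ∀ n, ∑ x, (dMax S f n x ^ p - p / (p - 1) * (dMax S f n x ^ (p - 1) * f x)) =
      ∑ x, (dMax S f n x ^ p - p / (p - 1) * (dMax S f n x ^ (p - 1) * cE (S n) f x)) := by
    intro n
    rw [Finset.sum_sub_distrib, Finset.sum_sub_distrib, ← Finset.mul_sum, ← Finset.mul_sum,
      cE_sum (S n) f (fun x => dMax S f n x ^ (p - 1))]
    intro x y h
    simp only
    rw [dMax_dep S hS f n x y h]
  have hp1 : 0 < p - 1 := by linarith
  have hpow : ∀ y : ℝ, 0 ≤ y → y ^ (p - 1) * y = y ^ p := by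
    intro y hy
    nth_rewrite 2 [← Real.rpow_one y]
    rw [← Real.rpow_add_of_nonneg hy hp1.le zero_le_one]
    congr 1; ring
  have hq : 1 ≤ p / (p - 1) := by rw [le_div_iff₀ hp1]; linarith
  induction n with
  | zero =>
    rw [key]
    refine Finset.sum_nonpos fun x _ => ?_
    have := cE_nonneg (S 0) f hf x
    simp only [dMax]
    rw [hpow _ this]
    have := Real.rpow_nonneg this p
    nlinarith
  | succ n ih =>
    rw [key]
    refine le_trans ?_ ih
    have h2 : ∑ x, (dMax S f n x ^ p - p / (p - 1) * (dMax S f n x ^ (p - 1) * f x)) =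
      ∑ x, (dMax S f n x ^ p - p / (p - 1) * (dMax S f n x ^ (p - 1) * cE (S (n+1)) f x)) := by
      rw [Finset.sum_sub_distrib, Finset.sum_sub_distrib, ← Finset.mul_sum, ← Finset.mul_sum,
        cE_sum (S (n+1)) f (fun x => dMax S f n x ^ (p - 1))]
      intro x y h
      simp only
      rw [dMax_dep S hS f n x y fun i hi => h i (hS (Nat.le_succ n) hi)]
    rw [h2]
    refine Finset.sum_le_sum fun x _ => ?_
    simp only [dMax]
    rcases le_total (cE (S (n+1)) f x) (dMax S f n x) with h | h
    · rw [max_eq_left h]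
    · rw [max_eq_right h]
      have hb := cE_nonneg (S (n+1)) f hf x
      have hy := dMax_nonneg S f hf n x
      rw [hpow _ hb]
      have := young' hp hy hb
      set Y := dMax S f n x
      set M := cE (S (n+1)) f x
      have e1 : p / (p - 1) * (Y ^ (p - 1) * M) ≤ Y ^ p + M ^ p / (p - 1) := by
        calc p / (p - 1) * (Y ^ (p - 1) * M) = (p * (Y ^ (p - 1) * M)) / (p - 1) := by ring
          _ ≤ ((p - 1) * Y ^ p + M ^ p) / (p - 1) := by gcongr
          _ = _ := by field_simp
      have e2 : p / (p - 1) * M ^ p = M ^ p + M ^ p / (p - 1) := by field_simp; ring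
      linarith

lemma doob {m N : ℕ} (S : ℕ → Finset (Fin N)) (hS : Monotone S)
    (f : (Fin N → ZMod (m + 1)) → ℝ) (hf : ∀ x, 0 ≤ f x) {p : ℝ} (hp : 1 < p) (n : ℕ) :
    ∑ x, dMax S f n x ^ p ≤ (p / (p - 1)) ^ p * ∑ x, f x ^ p := by
  have h := doob_aux S hS f hf hp n
  have hp1 : 0 < p - 1 := by linarith
  have hp0 : 0 < p := by linarith
  have h2 : ∀ x, p / (p - 1) * (dMax S f n x ^ (p - 1) * f x) ≤
      (p - 1) / p * dMax S f n x ^ p + (p / (p - 1)) ^ p / p * f x ^ p := by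
    intro x
    have hq : 0 ≤ p / (p - 1) := by positivity
    have := young' hp (dMax_nonneg S f hf n x) (mul_nonneg hq (hf x))
    rw [Real.mul_rpow hq (hf x)] at this
    have h3 : dMax S f n x ^ (p - 1) * (p / (p - 1) * f x) ≤ ((p - 1) * dMax S f n x ^ p +
      (p / (p - 1)) ^ p * f x ^ p) / p := by rw [le_div_iff₀ hp0]; linarith
    calc _ = dMax S f n x ^ (p - 1) * (p / (p - 1) * f x) := by ring
      _ ≤ _ := h3
      _ = _ := by ring
  have h4 : ∑ x, (1 / p * dMax S f n x ^ p - (p / (p - 1)) ^ p / p * f x ^ p) ≤ 0 := by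
    refine le_trans (Finset.sum_le_sum fun x _ => ?_) h
    have e : (1 / p) = 1 - (p - 1) / p := by field_simp; ring
    rw [e]
    linarith [h2 x]
  rw [Finset.sum_sub_distrib, ← Finset.mul_sum, ← Finset.mul_sum, sub_nonpos] at h4
  have := mul_le_mul_of_nonneg_left h4 hp0.le
  calc _ = p * (1 / p * ∑ x, dMax S f n x ^ p) := by field_simp
    _ ≤ _ := this
    _ = _ := by field_simp

/-- initial segments under a permutation -/
def segS {N : ℕ} (π : Equiv.Perm (Fin N)) (l : ℕ) : Finset (Fin N) :=
  (Finset.univ.filter fun i : Fin N => (i : ℕ) < l).map π.toEmbedding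

lemma segS_mono {N : ℕ} (π : Equiv.Perm (Fin N)) : Monotone (segS π) := by
  intro a b h
  unfold segS
  refine Finset.map_subset_map.2 ?_
  intro i
  simp only [Finset.mem_filter, Finset.mem_univ, true_and]
  omega

/-- averaged Doob maximal function -/
def mM {m N : ℕ} (f : (Fin N → ZMod (m + 1)) → ℝ) (x : Fin N → ZMod (m + 1)) : ℝ :=
  ∑ π : Equiv.Perm (Fin N), ((Fintype.card (Equiv.Perm (Fin N)) : ℝ)⁻¹) * dMax (segS π) f N x

lemma mM_nonneg {m N : ℕ} (f : (Fin N → ZMod (m + 1)) → ℝ) (hf : ∀ x, 0 ≤ f x) (x) :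
    0 ≤ mM f x :=
  Finset.sum_nonneg fun π _ => mul_nonneg (by positivity) (dMax_nonneg _ _ hf _ _)

lemma mM_bound {m N : ℕ} (f : (Fin N → ZMod (m + 1)) → ℝ) (hf : ∀ x, 0 ≤ f x)
    {p : ℝ} (hp : 1 < p) :
    ∑ x, mM f x ^ p ≤ (p / (p - 1)) ^ p * ∑ x, f x ^ p := by
  have hc : (Fintype.card (Equiv.Perm (Fin N)) : ℝ) ≠ 0 := by
    exact_mod_cast Fintype.card_ne_zero
  calc ∑ x, mM f x ^ p ≤ ∑ x, ∑ π : Equiv.Perm (Fin N),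
        ((Fintype.card (Equiv.Perm (Fin N)) : ℝ)⁻¹) * dMax (segS π) f N x ^ p := by
        refine Finset.sum_le_sum fun x _ => ?_
        refine Real.rpow_arith_mean_le_arith_mean_rpow _ _ _ (fun _ _ => by positivity) ?_
          (fun π _ => dMax_nonneg _ _ hf _ _) hp.le
        simp [hc]
    _ = ∑ π : Equiv.Perm (Fin N), ((Fintype.card (Equiv.Perm (Fin N)) : ℝ)⁻¹) *
        ∑ x, dMax (segS π) f N x ^ p := by
        rw [Finset.sum_comm]
        simp_rw [Finset.mul_sum]
    _ ≤ ∑ π : Equiv.Perm (Fin N), ((Fintype.card (Equiv.Perm (Fin N)) : ℝ)⁻¹) *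
        ((p / (p - 1)) ^ p * ∑ x, f x ^ p) := by
        gcongr with π
        exact doob _ (segS_mono π) f hf hp N
    _ = _ := by
        rw [Finset.sum_const, nsmul_eq_mul, Finset.card_univ]
        field_simp

lemma exists_seg {N : ℕ} (S : Finset (Fin N)) : ∃ τ : Equiv.Perm (Fin N),
    S = segS τ S.card := by
  have hle : S.card ≤ N := by simpa using Finset.card_le_univ S
  have hc : (Finset.univ.filter fun i : Fin N => (i : ℕ) < S.card).card = S.card := by
    rw [Fin.card_filter_val_lt]
    omega
  let e : {i // i ∈ (Finset.univ.filter fun i : Fin N => (i : ℕ) < S.card)} ≃ {i // i ∈ S} :=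
    Finset.equivOfCardEq hc
  refine ⟨e.extendSubtype, ?_⟩
  symm
  unfold segS
  apply Finset.eq_of_subset_of_card_le
  · intro j hj
    rw [Finset.mem_map] at hj
    obtain ⟨i, hi, rfl⟩ := hj
    exact e.extendSubtype_mem i hi
  · rw [Finset.card_map, hc]

lemma avg_le_mM {m N : ℕ} (f : (Fin N → ZMod (m + 1)) → ℝ) (hf : ∀ x, 0 ≤ f x)
    {a b : ℝ} (ha : 0 ≤ a) (hb : 0 ≤ b) (hab : b + a = 1) (x) :
    ∑ S : Finset (Fin N), b ^ S.card * a ^ (N - S.card) * cE S f x ≤ mM f x := by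
  have hc : (Fintype.card (Equiv.Perm (Fin N)) : ℝ) ≠ 0 := by
    exact_mod_cast Fintype.card_ne_zero
  have h1 : ∀ π : Equiv.Perm (Fin N),
      ∑ S : Finset (Fin N), b ^ S.card * a ^ (N - S.card) * cE S f x =
      ∑ S : Finset (Fin N), b ^ S.card * a ^ (N - S.card) * cE (S.map π.toEmbedding) f x := by
    intro π
    rw [← (Equiv.finsetCongr π).sum_comp]
    refine Finset.sum_congr rfl fun S _ => ?_
    simp [Equiv.finsetCongr]
  have h2 : ∑ S : Finset (Fin N), b ^ S.card * a ^ (N - S.card) * cE S f x =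
     ∑ π : Equiv.Perm (Fin N), ((Fintype.card (Equiv.Perm (Fin N)) : ℝ)⁻¹) *
      ∑ S : Finset (Fin N), b ^ S.card * a ^ (N - S.card) * cE (S.map π.toEmbedding) f x := by
    calc _ = ∑ π : Equiv.Perm (Fin N), ((Fintype.card (Equiv.Perm (Fin N)) : ℝ)⁻¹) *
          ∑ S : Finset (Fin N), b ^ S.card * a ^ (N - S.card) * cE S f x := by
          rw [Finset.sum_const, nsmul_eq_mul, Finset.card_univ]; field_simp
      _ = _ := Finset.sum_congr rfl fun π _ => by rw [← h1 π]
  rw [h2]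
  have h3 : ∀ S : Finset (Fin N), ∑ π : Equiv.Perm (Fin N), cE (S.map π.toEmbedding) f x =
      ∑ π : Equiv.Perm (Fin N), cE (segS π S.card) f x := by
    intro S
    obtain ⟨τ, hτ⟩ := exists_seg S
    rw [← Equiv.sum_comp (Equiv.mulRight τ) (fun π => cE (segS π S.card) f x)]
    refine Finset.sum_congr rfl fun π _ => ?_
    congr 1
    conv_lhs => rw [hτ]
    unfold segS
    rw [Finset.map_map]
    rfl
  simp_rw [Finset.mul_sum]
  rw [Finset.sum_comm]
  have hsum : ∑ S : Finset (Fin N), b ^ S.card * a ^ (N - S.card) = 1 := by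
    have := Finset.prod_add (fun _ : Fin N => b) (fun _ => a) Finset.univ
    simp only [hab, Finset.prod_const_one, Finset.powerset_univ, Finset.prod_const,
      Finset.card_sdiff_of_subset (Finset.subset_univ _), Finset.card_univ, Fintype.card_fin] at this
    exact this.symm
  calc _ = ∑ S : Finset (Fin N), (b ^ S.card * a ^ (N - S.card)) *
        ∑ π : Equiv.Perm (Fin N), ((Fintype.card (Equiv.Perm (Fin N)) : ℝ)⁻¹) *
          cE (segS π S.card) f x := by
        refine Finset.sum_congr rfl fun S _ => ?_
        rw [← Finset.mul_sum, ← Finset.mul_sum, ← Finset.mul_sum, ← h3]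
        ring
    _ ≤ ∑ S : Finset (Fin N), (b ^ S.card * a ^ (N - S.card)) * mM f x := by
        unfold mM
        gcongr with S _ π _
        apply cE_le_dMax
        simpa using Finset.card_le_univ S
    _ = mM f x := by rw [← Finset.sum_mul, hsum, one_mul]

lemma cE_conv {m N : ℕ} (f : (Fin N → ZMod (m + 1)) → ℝ) (v : ZMod (m + 1) → ℝ)
    (hv1 : ∑ z, v z = 1) (S : Finset (Fin N)) (x) :
    ∑ y : Fin N → ZMod (m + 1), (∏ i, v (y i)) * cE S f (x - y) =
    ∑ y : Fin N → ZMod (m + 1), ((∏ i ∈ S, v (y i)) * (((m : ℝ) + 1)⁻¹) ^ (N - S.card)) *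
      f (x - y) := by
  unfold cE
  have e1 : ∀ y : Fin N → ZMod (m + 1), ∑ z : Fin N → ZMod (m + 1), f (S.piecewise (x - y) z) =
      ∑ z : Fin N → ZMod (m + 1), f (x - S.piecewise y z) := by
    intro y
    rw [← (Equiv.subLeft x).sum_comp]
    refine Finset.sum_congr rfl fun z _ => ?_
    congr 1
    ext i
    by_cases hi : i ∈ S <;> simp [hi, Finset.piecewise]
  simp_rw [e1]
  have e2 : ∑ y : Fin N → ZMod (m + 1), ∑ z : Fin N → ZMod (m + 1),
      (∏ i, v (y i)) * f (x - S.piecewise y z) =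
      ∑ y : Fin N → ZMod (m + 1), ((∏ i ∈ S, v (y i)) * f (x - y)) * ((m : ℝ) + 1) ^ S.card := by
    rw [swap_sum S]
    refine Finset.sum_congr rfl fun y _ => ?_
    have : ∀ z : Fin N → ZMod (m + 1), (∏ i, v (S.piecewise y z i)) *
        f (x - S.piecewise (S.piecewise y z) (S.piecewise z y)) =
        ((∏ i ∈ S, v (y i)) * f (x - y)) * ∏ i, (if i ∈ S then 1 else v (z i)) := by
      intro z
      have a1 : S.piecewise (S.piecewise y z) (S.piecewise z y) = y := by
        ext i
        by_cases hi : i ∈ S <;> simp [hi, Finset.piecewise]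
      have a2 : ∏ i, v (S.piecewise y z i) = (∏ i ∈ S, v (y i)) *
          ∏ i, (if i ∈ S then 1 else v (z i)) := by
        rw [← Finset.prod_ite_mem_eq S, ← Finset.prod_mul_distrib]
        refine Finset.prod_congr rfl fun i _ => ?_
        by_cases hi : i ∈ S <;> simp [hi, Finset.piecewise]
      rw [a1, a2]; ring
    simp_rw [this]
    rw [← Finset.mul_sum]
    congr 1
    have := Finset.prod_univ_sum (fun _ : Fin N => (Finset.univ : Finset (ZMod (m + 1))))
      (fun i z => if i ∈ S then (1 : ℝ) else v z)
    rw [Fintype.piFinset_univ] at this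
    rw [← this]
    have : ∀ i, ∑ z : ZMod (m + 1), (if i ∈ S then (1 : ℝ) else v z) =
        if i ∈ S then ((m : ℝ) + 1) else 1 := by
      intro i
      by_cases hi : i ∈ S <;> simp [hi, hv1, ZMod.card]
    simp_rw [this]
    simp
  calc _ = (((m : ℝ) + 1) ^ N)⁻¹ * ∑ y : Fin N → ZMod (m + 1), ∑ z : Fin N → ZMod (m + 1),
      (∏ i, v (y i)) * f (x - S.piecewise y z) := by
        rw [Finset.mul_sum]
        refine Finset.sum_congr rfl fun y _ => ?_
        rw [← Finset.mul_sum]; ring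
    _ = _ := by
        rw [e2, Finset.mul_sum]
        refine Finset.sum_congr rfl fun y _ => ?_
        have hle : S.card ≤ N := by simpa using Finset.card_le_univ S
        have h0 : ((m : ℝ) + 1) ≠ 0 := by positivity
        have : ((m : ℝ) + 1) ^ N = ((m : ℝ) + 1) ^ S.card * ((m : ℝ) + 1) ^ (N - S.card) := by
          rw [← pow_add]; congr 1; omega
        rw [this, inv_pow]
        field_simp

lemma prod_conv_le {m N : ℕ} (f : (Fin N → ZMod (m + 1)) → ℝ) (hf : ∀ x, 0 ≤ f x)
    (v w : ZMod (m + 1) → ℝ) (hv : ∀ z, 0 ≤ v z) (hv1 : ∑ z, v z = 1)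
    {a b : ℝ} (ha : 0 ≤ a) (hb : 0 ≤ b) (hab : b + a = 1)
    (hw : ∀ z, w z = b * v z + a * ((m : ℝ) + 1)⁻¹) (x) :
    ∑ y : Fin N → ZMod (m + 1), (∏ i, w (y i)) * f (x - y) ≤
    ∑ y : Fin N → ZMod (m + 1), (∏ i, v (y i)) * mM f (x - y) := by
  have h1 : ∀ y : Fin N → ZMod (m + 1), ∏ i, w (y i) = ∑ S : Finset (Fin N),
      b ^ S.card * a ^ (N - S.card) *
        ((∏ i ∈ S, v (y i)) * (((m : ℝ) + 1)⁻¹) ^ (N - S.card)) := by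
    intro y
    simp_rw [hw]
    rw [Finset.prod_add, Finset.powerset_univ]
    refine Finset.sum_congr rfl fun S _ => ?_
    rw [Finset.prod_mul_distrib, Finset.prod_const, Finset.prod_const,
      Finset.card_sdiff_of_subset (Finset.subset_univ _), Finset.card_univ, Fintype.card_fin, mul_pow]
    ring
  calc _ = ∑ S : Finset (Fin N), b ^ S.card * a ^ (N - S.card) *
      ∑ y : Fin N → ZMod (m + 1), ((∏ i ∈ S, v (y i)) * (((m : ℝ) + 1)⁻¹) ^ (N - S.card)) *
        f (x - y) := by
        simp_rw [h1, Finset.mul_sum, Finset.sum_mul]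
        rw [Finset.sum_comm]
        refine Finset.sum_congr rfl fun S _ => Finset.sum_congr rfl fun y _ => ?_
        ring
    _ = ∑ S : Finset (Fin N), b ^ S.card * a ^ (N - S.card) *
      ∑ y : Fin N → ZMod (m + 1), (∏ i, v (y i)) * cE S f (x - y) := by
        simp_rw [cE_conv f v hv1]
    _ = ∑ y : Fin N → ZMod (m + 1), (∏ i, v (y i)) *
        ∑ S : Finset (Fin N), b ^ S.card * a ^ (N - S.card) * cE S f (x - y) := by
        simp_rw [Finset.mul_sum]
        rw [Finset.sum_comm]
        refine Finset.sum_congr rfl fun S _ => Finset.sum_congr rfl fun y _ => ?_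
        ring
    _ ≤ _ := by
        gcongr with y
        · exact Finset.prod_nonneg fun i _ => hv _
        · exact avg_le_mM f hf ha hb hab _

lemma conv_jensen {m N : ℕ} (g : (Fin N → ZMod (m + 1)) → ℝ) (hg : ∀ x, 0 ≤ g x)
    (k : (Fin N → ZMod (m + 1)) → ℝ) (hk : ∀ x, 0 ≤ k x) (hk1 : ∑ x, k x = 1)
    {p : ℝ} (hp : 1 ≤ p) :
    ∑ x, (∑ y, k y * g (x - y)) ^ p ≤ ∑ x, g x ^ p := by
  calc _ ≤ ∑ x, ∑ y, k y * g (x - y) ^ p := by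
        refine Finset.sum_le_sum fun x _ => ?_
        exact Real.rpow_arith_mean_le_arith_mean_rpow _ _ _ (fun _ _ => hk _) hk1
          (fun y _ => hg _) hp
    _ = ∑ y, k y * ∑ x, g x ^ p := by
        rw [Finset.sum_comm]
        refine Finset.sum_congr rfl fun y _ => ?_
        rw [← Finset.mul_sum]
        congr 1
        exact (Equiv.subRight y).sum_comp (fun x => g x ^ p)
    _ = _ := by rw [← Finset.sum_mul, hk1, one_mul]

lemma prod_sum_one {m N : ℕ} (v : ZMod (m + 1) → ℝ) (hv1 : ∑ z, v z = 1) :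
    ∑ y : Fin N → ZMod (m + 1), ∏ i, v (y i) = 1 := by
  have := Finset.prod_univ_sum (fun _ : Fin N => (Finset.univ : Finset (ZMod (m + 1))))
      (fun _ z => v z)
  rw [Fintype.piFinset_univ] at this
  rw [← this]
  simp [hv1]

/-! Interpolation -/

def cpw (c w : ℂ) : ℂ := if c = 0 then 0 else c / ‖c‖ * Complex.exp (Real.log ‖c‖ * w)

lemma cpw_norm_le (c w : ℂ) : ‖cpw c w‖ ≤ ‖c‖ ^ w.re := by
  unfold cpw
  split_ifs with h
  · rw [norm_zero]; positivity
  · have hc : 0 < ‖c‖ := norm_pos_iff.2 h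
    rw [norm_mul, norm_div, Complex.norm_exp]
    simp only [Complex.norm_real, norm_norm, Complex.mul_re, Complex.ofReal_re, Complex.ofReal_im,
      zero_mul, sub_zero]
    rw [div_self hc.ne', one_mul, Real.rpow_def_of_pos hc]

lemma cpw_one (c : ℂ) : cpw c 1 = c := by
  unfold cpw
  split_ifs with h
  · exact h.symm
  · have hc : 0 < ‖c‖ := norm_pos_iff.2 h
    rw [mul_one, ← Complex.ofReal_exp, Real.exp_log hc]
    have : (‖c‖ : ℂ) ≠ 0 := by exact_mod_cast hc.ne'
    field_simp

lemma cpw_conj_mul (c : ℂ) (t : ℝ) (ht : 0 < t) :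
    cpw ((starRingEnd ℂ) c) ((t : ℝ) : ℂ) * c = ((‖c‖ ^ (t + 1) : ℝ) : ℂ) := by
  unfold cpw
  by_cases h : c = 0
  · subst h
    simp [Real.zero_rpow (by linarith : t + 1 ≠ 0)]
  · have hc : 0 < ‖c‖ := norm_pos_iff.2 h
    have : (‖c‖ : ℂ) ≠ 0 := by exact_mod_cast hc.ne'
    rw [if_neg (by simpa using h), RCLike.norm_conj, Real.rpow_add hc, Real.rpow_one,
      Real.rpow_def_of_pos hc]
    push_cast
    have h2 : (starRingEnd ℂ) c * c = (‖c‖ : ℂ) ^ 2 := by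
      rw [mul_comm, Complex.mul_conj, Complex.normSq_eq_norm_sq]; push_cast; rfl
    field_simp
    rw [← h2]

lemma cpw_diff (c : ℂ) : Differentiable ℂ (cpw c) := by
  unfold cpw
  by_cases h : c = 0
  · simp [h]
  · simp only [h, if_false]
    fun_prop

lemma cpw_bdd (c w : ℂ) {p : ℝ} (h0 : 0 ≤ w.re) (h1 : w.re ≤ p) :
    ‖cpw c w‖ ≤ (1 + ‖c‖) ^ p := by
  refine (cpw_norm_le c w).trans ?_
  have := norm_nonneg c
  calc ‖c‖ ^ w.re ≤ (1 + ‖c‖) ^ w.re := by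
        apply Real.rpow_le_rpow <;> linarith
    _ ≤ _ := Real.rpow_le_rpow_of_exponent_le (by linarith) h1

lemma interp {ι : Type*} [Fintype ι] [DecidableEq ι] (D : (ι → ℂ) →ₗ[ℂ] (ι → ℂ)) {A ε : ℝ}
    (hA : 0 ≤ A) (hε : 0 ≤ ε) (h1 : ∀ f, ∑ x, ‖D f x‖ ≤ A * ∑ x, ‖f x‖)
    (h2 : ∀ f, ∑ x, ‖D f x‖ ^ 2 ≤ ε ^ 2 * ∑ x, ‖f x‖ ^ 2) {p : ℝ} (hp : 1 < p) (hp2 : p ≤ 2)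
    (f : ι → ℂ) :
    ∑ x, ‖D f x‖ ^ p ≤ (A ^ (2 / p - 1) * ε ^ (2 - 2 / p)) ^ p * ∑ x, ‖f x‖ ^ p := by
  set H := ∑ x, ‖D f x‖ ^ p with hH
  set Φ := ∑ x, ‖f x‖ ^ p with hΦ
  have hp0 : 0 < p := by linarith
  have hH0 : 0 ≤ H := Finset.sum_nonneg fun _ _ => by positivity
  have hΦ0 : 0 ≤ Φ := Finset.sum_nonneg fun _ _ => by positivity
  rcases hH0.eq_or_lt with hz | hHpos
  · rw [← hz]; positivity
  set u : ℂ → ι → ℂ := fun z x => cpw ((starRingEnd ℂ) (D f x)) (p * z / 2) with hu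
  set g : ℂ → ι → ℂ := fun z y => cpw (f y) (p * (1 - z / 2)) with hg
  set F : ℂ → ℂ := fun z => ∑ x, u z x * D (g z) x with hF
  have hDexp : ∀ z x, D (g z) x = ∑ y, g z y * D (Pi.single y 1) x := by
    intro z x
    rw [LinearMap.pi_apply_eq_sum_univ D (g z)]
    rw [Finset.sum_apply]
    refine Finset.sum_congr rfl fun y _ => ?_
    rw [Pi.smul_apply, smul_eq_mul]
    have e : (fun j => if y = j then (1 : ℂ) else 0) = Pi.single y 1 := by
      ext j
      simp [Pi.single_apply, eq_comm]
    rw [e]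
  have hre1 : ∀ z : ℂ, ((p : ℂ) * z / 2).re = p * z.re / 2 := by
    intro z
    simp
  have hre2 : ∀ z : ℂ, ((p : ℂ) * (1 - z / 2)).re = p * (1 - z.re / 2) := by
    intro z
    simp
  have hdiff : Differentiable ℂ F := by
    simp only [hF, hDexp]
    refine Differentiable.fun_sum fun x _ => ?_
    refine Differentiable.fun_mul ?_ ?_
    · exact (cpw_diff _).comp (by fun_prop)
    · refine Differentiable.fun_sum fun y _ => ?_
      refine Differentiable.mul_const ?_ _
      exact (cpw_diff _).comp (by fun_prop)
  have hB : BddAbove ((norm ∘ F) '' Complex.HadamardThreeLines.verticalClosedStrip 0 1) := by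
    refine ⟨∑ x, (1 + ‖D f x‖) ^ p * ∑ y, (1 + ‖f y‖) ^ p * ‖D (Pi.single y 1) x‖, ?_⟩
    rintro _ ⟨z, hz, rfl⟩
    have hz' : 0 ≤ z.re ∧ z.re ≤ 1 := hz
    simp only [Function.comp, hF, hDexp]
    refine (norm_sum_le _ _).trans (Finset.sum_le_sum fun x _ => ?_)
    rw [norm_mul]
    refine mul_le_mul ?_ ?_ (norm_nonneg _) (by positivity)
    · have := cpw_bdd ((starRingEnd ℂ) (D f x)) (p * z / 2) (p := p)
        (by rw [hre1]; nlinarith) (by rw [hre1]; nlinarith)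
      rwa [RCLike.norm_conj] at this
    · refine (norm_sum_le _ _).trans (Finset.sum_le_sum fun y _ => ?_)
      rw [norm_mul]
      gcongr
      exact cpw_bdd _ _ (by rw [hre2]; nlinarith) (by rw [hre2]; nlinarith)
  have ha : ∀ z ∈ Complex.re ⁻¹' {(0 : ℝ)}, ‖F z‖ ≤ A * Φ := by
    intro z hz
    have hz0 : z.re = 0 := hz
    calc ‖F z‖ ≤ ∑ x, ‖u z x * D (g z) x‖ := norm_sum_le _ _
      _ ≤ ∑ x, ‖D (g z) x‖ := by
          refine Finset.sum_le_sum fun x _ => ?_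
          rw [norm_mul]
          have := cpw_norm_le ((starRingEnd ℂ) (D f x)) (p * z / 2)
          rw [hre1, hz0, mul_zero, zero_div, Real.rpow_zero] at this
          exact mul_le_of_le_one_left (norm_nonneg _) this
      _ ≤ A * ∑ x, ‖g z x‖ := h1 _
      _ ≤ A * Φ := by
          refine mul_le_mul_of_nonneg_left (Finset.sum_le_sum fun x _ => ?_) hA
          have := cpw_norm_le (f x) (p * (1 - z / 2))
          rwa [hre2, hz0, zero_div, sub_zero, mul_one] at this
  have hb : ∀ z ∈ Complex.re ⁻¹' {(1 : ℝ)}, ‖F z‖ ≤ ε * (Φ ^ (1/2 : ℝ) * H ^ (1/2 : ℝ)) := by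
    intro z hz
    have hz1 : z.re = 1 := hz
    have hsq : ∀ c : ℝ, 0 ≤ c → (c ^ (p / 2)) ^ 2 = c ^ p := by
      intro c hc
      rw [← Real.rpow_natCast, ← Real.rpow_mul hc]; congr 1; push_cast; ring
    have hUU : ∑ x, ‖u z x‖ ^ 2 ≤ H := by
      refine Finset.sum_le_sum fun x _ => ?_
      have := cpw_norm_le ((starRingEnd ℂ) (D f x)) (p * z / 2)
      rw [hre1, hz1, mul_one, RCLike.norm_conj] at this
      rw [← hsq _ (norm_nonneg _)]
      gcongr
    have hGG : ∑ x, ‖g z x‖ ^ 2 ≤ Φ := by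
      refine Finset.sum_le_sum fun x _ => ?_
      have := cpw_norm_le (f x) (p * (1 - z / 2))
      rw [hre2, hz1, show p * (1 - 1 / 2) = p / 2 by ring] at this
      rw [← hsq _ (norm_nonneg _)]
      gcongr
    have hFle : ‖F z‖ ≤ ∑ x, ‖u z x‖ * ‖D (g z) x‖ := by
      refine (norm_sum_le _ _).trans (le_of_eq ?_)
      simp only [norm_mul]
    rw [← Real.sqrt_eq_rpow, ← Real.sqrt_eq_rpow]
    calc ‖F z‖ ≤ ∑ x, ‖u z x‖ * ‖D (g z) x‖ := hFle
      _ ≤ √(∑ x, ‖u z x‖ ^ 2) * √(∑ x, ‖D (g z) x‖ ^ 2) := Real.sum_mul_le_sqrt_mul_sqrt _ _ _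
      _ ≤ √H * √(ε ^ 2 * Φ) := by
          gcongr
          exact (h2 _).trans (by gcongr)
      _ = _ := by rw [Real.sqrt_mul (by positivity), Real.sqrt_sq hε]; ring
  set θ : ℝ := 2 - 2 / p with hθ
  have hθ0 : 0 < θ := by
    rw [hθ, sub_pos, div_lt_iff₀ hp0]; linarith
  have hθ1 : θ ≤ 1 := by
    have : 1 ≤ 2 / p := by rw [le_div_iff₀ hp0]; linarith
    linarith
  have hFθ : F (θ : ℂ) = (H : ℂ) := by
    simp only [hF]
    have hgθ : g (θ : ℂ) = f := by
      ext y
      simp only [hg]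
      have : (p : ℂ) * (1 - (θ : ℂ) / 2) = 1 := by
        have : p * (1 - θ / 2) = 1 := by rw [hθ]; field_simp; ring
        exact_mod_cast this
      rw [this, cpw_one]
    rw [hgθ, hH, Complex.ofReal_sum]
    refine Finset.sum_congr rfl fun x _ => ?_
    simp only [hu]
    have : (p : ℂ) * (θ : ℂ) / 2 = ((p - 1 : ℝ) : ℂ) := by
      have : p * θ / 2 = p - 1 := by rw [hθ]; field_simp
      exact_mod_cast this
    rw [this, cpw_conj_mul _ _ (by linarith)]
    congr 2
    ring
  have key := Complex.HadamardThreeLines.norm_le_interp_of_mem_verticalClosedStrip₀₁' F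
    (z := (θ : ℂ)) (by
      show (θ : ℂ).re ∈ Set.Icc (0 : ℝ) 1
      simp only [Complex.ofReal_re]
      exact ⟨hθ0.le, hθ1⟩) hdiff.diffContOnCl hB ha hb
  rw [hFθ, Complex.norm_real, Real.norm_of_nonneg hH0, Complex.ofReal_re] at key
  have hr : (A * Φ) ^ (1 - θ) * (ε * (Φ ^ (1/2 : ℝ) * H ^ (1/2 : ℝ))) ^ θ =
      (A ^ (2 / p - 1) * ε ^ θ) * Φ ^ (1 / p) * H ^ (1 - 1 / p) := by
    have hh : 1 - θ = 2 / p - 1 := by rw [hθ]; ring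
    have h1 : 0 ≤ 1 - θ := by linarith
    rw [Real.mul_rpow hA hΦ0, Real.mul_rpow hε (by positivity), Real.mul_rpow (by positivity)
      (by positivity), ← Real.rpow_mul hΦ0, ← Real.rpow_mul hH0,
      show (1 / p : ℝ) = (1 - θ) + 1 / 2 * θ by rw [hθ]; ring,
      Real.rpow_add_of_nonneg hΦ0 h1 (by positivity), hh,
      show 1 - (2 / p - 1 + 1 / 2 * θ) = 1 / 2 * θ by rw [hθ]; ring]
    ring
  rw [hr] at key
  set K := A ^ (2 / p - 1) * ε ^ θ with hK
  have hK0 : 0 ≤ K := by positivity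
  have key2 : H ^ (1 / p) ≤ K * Φ ^ (1 / p) := by
    have e : H = H ^ (1 / p) * H ^ (1 - 1 / p) := by
      rw [← Real.rpow_add hHpos]; simp
    have hpos : 0 < H ^ (1 - 1 / p) := by positivity
    refine le_of_mul_le_mul_right ?_ hpos
    rw [← e]; exact key
  calc H = (H ^ (1 / p)) ^ p := by
        rw [← Real.rpow_mul hH0]; field_simp; simp
    _ ≤ (K * Φ ^ (1 / p)) ^ p := by gcongr
    _ = _ := by
        rw [Real.mul_rpow hK0 (by positivity), ← Real.rpow_mul hΦ0]
        congr 1; field_simp; simp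

/-! Fourier part -/

def chF {m N : ℕ} (ξ x : Fin N → ZMod (m + 1)) : ℂ := ∏ i, ZMod.stdAddChar (ξ i * x i)

def hatF {m N : ℕ} (f : (Fin N → ZMod (m + 1)) → ℂ) (ξ : Fin N → ZMod (m + 1)) : ℂ :=
  ∑ x, chF ξ x * f x

lemma chF_add {m N : ℕ} (ξ x y : Fin N → ZMod (m + 1)) :
    chF ξ (x + y) = chF ξ x * chF ξ y := by
  unfold chF
  rw [← Finset.prod_mul_distrib]
  refine Finset.prod_congr rfl fun i _ => ?_
  rw [Pi.add_apply, mul_add, AddChar.map_add_eq_mul]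

lemma chF_conj {m N : ℕ} (ξ x : Fin N → ZMod (m + 1)) :
    (starRingEnd ℂ) (chF ξ x) = chF ξ (-x) := by
  unfold chF
  rw [map_prod]
  refine Finset.prod_congr rfl fun i _ => ?_
  rw [Pi.neg_apply, mul_neg, AddChar.map_neg_eq_conj]

lemma chF_sum {m N : ℕ} (x : Fin N → ZMod (m + 1)) :
    ∑ ξ, chF ξ x = if x = 0 then ((m : ℂ) + 1) ^ N else 0 := by
  unfold chF
  have := Finset.prod_univ_sum (fun _ : Fin N => (Finset.univ : Finset (ZMod (m + 1))))
      (fun i z => (ZMod.stdAddChar (z * x i) : ℂ))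
  rw [Fintype.piFinset_univ] at this
  rw [← this]
  simp_rw [AddChar.sum_mulShift _ (ZMod.isPrimitive_stdAddChar (m + 1))]
  split_ifs with h
  · subst h
    simp [ZMod.card]
  · obtain ⟨i, hi⟩ := Function.ne_iff.1 h
    exact Finset.prod_eq_zero (Finset.mem_univ i) (by simp [show x i ≠ 0 from hi])

lemma parseval {m N : ℕ} (f : (Fin N → ZMod (m + 1)) → ℂ) :
    ∑ ξ, ‖hatF f ξ‖ ^ 2 = ((m : ℝ) + 1) ^ N * ∑ x, ‖f x‖ ^ 2 := by
  have h : ∀ c : ℂ, ((‖c‖ ^ 2 : ℝ) : ℂ) = c * (starRingEnd ℂ) c := by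
    intro c; rw [Complex.mul_conj, Complex.normSq_eq_norm_sq]
  have : ((∑ ξ, ‖hatF f ξ‖ ^ 2 : ℝ) : ℂ) = (((m : ℝ) + 1) ^ N * ∑ x, ‖f x‖ ^ 2 : ℝ) := by
    rw [Complex.ofReal_mul, Complex.ofReal_sum, Complex.ofReal_sum]
    simp_rw [h]
    unfold hatF
    simp_rw [map_sum, map_mul, chF_conj, Finset.sum_mul_sum]
    rw [Finset.sum_comm]
    rw [Finset.mul_sum]
    refine Finset.sum_congr rfl fun x _ => ?_
    rw [Finset.sum_comm]
    have e : ∀ y, ∑ ξ, chF ξ x * f x * (chF ξ (-y) * (starRingEnd ℂ) (f y)) =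
        if y = x then (((m : ℂ) + 1) ^ N * (f x * (starRingEnd ℂ) (f y))) else 0 := by
      intro y
      have e1 : ∀ ξ : Fin N → ZMod (m + 1),
          chF ξ x * f x * (chF ξ (-y) * (starRingEnd ℂ) (f y)) =
          chF ξ (x - y) * (f x * (starRingEnd ℂ) (f y)) := by
        intro ξ
        rw [sub_eq_add_neg, chF_add]; ring
      simp_rw [e1]
      rw [← Finset.sum_mul, chF_sum]
      simp only [sub_eq_zero, eq_comm (a := x)]
      split_ifs <;> simp
    simp_rw [e]
    simp
  exact_mod_cast this

lemma hatF_conv {m N : ℕ} (g f : (Fin N → ZMod (m + 1)) → ℂ) (ξ) :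
    hatF (convC g f) ξ = hatF g ξ * hatF f ξ := by
  unfold hatF convC
  rw [Finset.sum_mul]
  simp_rw [Finset.mul_sum]
  rw [Finset.sum_comm]
  refine Finset.sum_congr rfl fun y _ => ?_
  rw [← Equiv.sum_comp (Equiv.addRight y)]
  refine Finset.sum_congr rfl fun x _ => ?_
  simp only [Equiv.coe_addRight, add_sub_cancel_right]
  rw [chF_add]; ring

lemma l2_bound {m N : ℕ} (g f : (Fin N → ZMod (m + 1)) → ℂ) {ε : ℝ}
    (h : ∀ ξ, ‖hatF g ξ‖ ≤ ε) :
    ∑ x, ‖convC g f x‖ ^ 2 ≤ ε ^ 2 * ∑ x, ‖f x‖ ^ 2 := by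
  have h0 : (0 : ℝ) < ((m : ℝ) + 1) ^ N := by positivity
  refine le_of_mul_le_mul_left ?_ h0
  rw [← parseval, mul_left_comm, ← parseval, Finset.mul_sum]
  refine Finset.sum_le_sum fun ξ _ => ?_
  rw [hatF_conv, norm_mul, mul_pow]
  have := h ξ
  gcongr

def eN (N i k : ℕ) : ℝ := (k.choose i : ℝ) / (N.choose i : ℝ)

lemma card_sup {N k : ℕ} (hk : k ≤ N) (I : Finset (Fin N)) :
    ((((Finset.univ : Finset (Fin N)).powersetCard k).filter fun Z => I ⊆ Z).card : ℝ) =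
      N.choose k * eN N I.card k := by
  have hI : I.card ≤ N := by simpa using Finset.card_le_univ I
  have h1 : (((Finset.univ : Finset (Fin N)).powersetCard k).filter fun Z => I ⊆ Z).card =
      (Iᶜ.powersetCard (N - k)).card := by
    refine Finset.card_bij' (fun Z _ => Zᶜ) (fun Z _ => Zᶜ) ?_ ?_ ?_ ?_
    · intro Z hZ
      simp only [Finset.mem_filter, Finset.mem_powersetCard] at hZ ⊢
      refine ⟨Finset.compl_subset_compl.2 hZ.2, ?_⟩
      rw [Finset.card_compl, hZ.1.2, Fintype.card_fin]
    · intro Z hZ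
      simp only [Finset.mem_filter, Finset.mem_powersetCard] at hZ ⊢
      refine ⟨⟨Finset.subset_univ _, ?_⟩, ?_⟩
      · rw [Finset.card_compl, hZ.2, Fintype.card_fin]; omega
      · rw [← Finset.compl_subset_compl, compl_compl]; exact hZ.1
    · intro Z _; exact compl_compl _
    · intro Z _; exact compl_compl _
  rw [h1, Finset.card_powersetCard, Finset.card_compl, Fintype.card_fin]
  unfold eN
  have hpos : (0 : ℝ) < N.choose I.card := by exact_mod_cast Nat.choose_pos hI
  rw [← mul_div_assoc, eq_div_iff hpos.ne']
  norm_cast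
  rcases Nat.lt_or_ge k I.card with h | h
  · rw [Nat.choose_eq_zero_of_lt h, Nat.choose_eq_zero_of_lt (by omega : N - I.card < N - k)]
    simp
  · rw [Nat.choose_mul h, mul_comm]
    congr 1
    rw [← Nat.choose_symm (by omega : N - k ≤ N - I.card)]
    congr 1
    omega

lemma gen_sum {N k : ℕ} (hk : k ≤ N) (J : Finset (Fin N)) (t : ℝ) :
    ∑ Z ∈ (Finset.univ : Finset (Fin N)).powersetCard k, t ^ (Z ∩ J).card =
    N.choose k * ∑ i ∈ Finset.range (J.card + 1), (J.card.choose i : ℝ) * (t - 1) ^ i * eN N i k := by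
  have h1 : ∀ Z : Finset (Fin N), t ^ (Z ∩ J).card =
      ∑ I ∈ J.powerset, if I ⊆ Z then (t - 1) ^ I.card else 0 := by
    intro Z
    have := Finset.sum_pow_mul_eq_add_pow (t - 1) 1 (Z ∩ J)
    rw [sub_add_cancel] at this
    rw [← this, ← Finset.sum_filter]
    simp only [one_pow, mul_one]
    refine Finset.sum_congr ?_ fun _ _ => rfl
    ext I
    simp only [Finset.mem_powerset, Finset.mem_filter, Finset.subset_inter_iff]
    tauto
  simp_rw [h1]
  rw [Finset.sum_comm]
  have h2 : ∀ I ∈ J.powerset, ∑ Z ∈ (Finset.univ : Finset (Fin N)).powersetCard k,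
      (if I ⊆ Z then (t - 1) ^ I.card else 0) =
      (N.choose k * eN N I.card k) * (t - 1) ^ I.card := by
    intro I _
    rw [← card_sup hk, ← Finset.sum_filter, Finset.sum_const, nsmul_eq_mul]
  rw [Finset.sum_congr rfl h2, Finset.sum_powerset_apply_card
    (fun i => (N.choose k * eN N i k) * (t - 1) ^ i), Finset.mul_sum]
  refine Finset.sum_congr rfl fun i _ => ?_
  rw [nsmul_eq_mul]; ring

/-- Krawtchouk eigenvalue -/
def kap (m N k j : ℕ) : ℝ :=
  (-(m : ℝ)⁻¹) ^ j * ∑ i ∈ Finset.range (j + 1), (j.choose i : ℝ) * (-(m : ℝ) - 1) ^ i * eN N i k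

lemma kap_eq {m N k : ℕ} (hk : k ≤ N) (J : Finset (Fin N)) :
    N.choose k * kap m N k J.card = ∑ Z ∈ (Finset.univ : Finset (Fin N)).powersetCard k,
      (-(m : ℝ)⁻¹) ^ J.card * (-(m : ℝ)) ^ (Z ∩ J).card := by
  rw [← Finset.mul_sum, gen_sum hk]
  unfold kap
  ring

lemma kap_abs {m N k j : ℕ} (hk : k ≤ N) (hj : j ≤ N) :
    |kap m N k j| ≤ ((m : ℝ)⁻¹) ^ j *
      ∑ i ∈ Finset.range (j + 1), (j.choose i : ℝ) * ((m : ℝ) - 1) ^ i * eN N i k := by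
  obtain ⟨J, -, hJ⟩ := Finset.exists_subset_card_eq (s := (Finset.univ : Finset (Fin N))) (n := j)
    (by simpa using hj)
  subst hJ
  have hpos : (0 : ℝ) < N.choose k := by exact_mod_cast Nat.choose_pos hk
  refine le_of_mul_le_mul_left ?_ hpos
  rw [mul_left_comm, ← gen_sum hk, Finset.mul_sum]
  calc _ = |N.choose k * kap m N k J.card| := by rw [abs_mul, abs_of_pos hpos]
    _ ≤ _ := by
      rw [kap_eq hk]
      refine (Finset.abs_sum_le_sum_abs _ _).trans (le_of_eq ?_)
      refine Finset.sum_congr rfl fun Z _ => ?_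
      rw [abs_mul, abs_pow, abs_pow, abs_neg, abs_neg, abs_inv, Nat.abs_cast]

lemma sphere_sum {m N k : ℕ} (hm : 1 ≤ m) (hk : k ≤ N) (ξ : Fin N → ZMod (m + 1)) :
    ∑ y ∈ Finset.univ.filter (fun y : Fin N → ZMod (m + 1) => (hw y : ℤ) = (N : ℤ) - k), chF ξ y =
      ((N.choose k * m ^ (N - k) : ℕ) : ℂ) * (kap m N k (hw ξ) : ℂ) := by
  have h1 : ∀ Z : Finset (Fin N),
      ∑ y : Fin N → ZMod (m + 1), (if (Finset.univ.filter fun i => y i ≠ 0)ᶜ = Z then chF ξ y else 0)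
      = ∏ i, (if i ∈ Z then (1 : ℂ) else if ξ i = 0 then (m : ℂ) else -1) := by
    intro Z
    have := Finset.prod_univ_sum (fun _ : Fin N => (Finset.univ : Finset (ZMod (m + 1))))
      (fun i z => if (z = 0 ↔ i ∈ Z) then (ZMod.stdAddChar (ξ i * z) : ℂ) else 0)
    rw [Fintype.piFinset_univ] at this
    have e : ∀ y : Fin N → ZMod (m + 1),
        (if (Finset.univ.filter fun i => y i ≠ 0)ᶜ = Z then chF ξ y else 0) =
        ∏ i, if (y i = 0 ↔ i ∈ Z) then (ZMod.stdAddChar (ξ i * y i) : ℂ) else 0 := by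
      intro y
      split_ifs with h
      · unfold chF
        refine Finset.prod_congr rfl fun i _ => ?_
        rw [if_pos]
        rw [← h]; simp
      · symm
        by_contra hne
        apply h
        ext i
        have := Finset.prod_ne_zero_iff.1 hne i (Finset.mem_univ _)
        have h3 : (y i = 0 ↔ i ∈ Z) := by
          by_contra h4
          rw [if_neg h4] at this
          exact this rfl
        simp [h3]
    simp_rw [e]
    rw [← this]
    refine Finset.prod_congr rfl fun i _ => ?_
    have hs := AddChar.sum_mulShift (ξ i) (ZMod.isPrimitive_stdAddChar (m + 1))
    by_cases hi : i ∈ Z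
    · simp [hi]
    · simp only [hi, iff_false, if_false]
      have e2 : ∀ z : ZMod (m + 1), (if ¬ z = 0 then (ZMod.stdAddChar (ξ i * z) : ℂ) else 0) =
          ZMod.stdAddChar (z * ξ i) - if z = 0 then 1 else 0 := by
        intro z
        by_cases hz : z = 0
        · simp [hz]
        · simp [hz, mul_comm]
      simp_rw [e2]
      rw [Finset.sum_sub_distrib, hs]
      by_cases hξ : ξ i = 0
      · simp [hξ, ZMod.card]
      · simp [hξ]
  have h2 : ∑ y ∈ Finset.univ.filter (fun y : Fin N → ZMod (m + 1) => (hw y : ℤ) = (N : ℤ) - k),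
      chF ξ y = ∑ Z ∈ (Finset.univ : Finset (Fin N)).powersetCard k,
      ∑ y : Fin N → ZMod (m + 1),
        (if (Finset.univ.filter fun i => y i ≠ 0)ᶜ = Z then chF ξ y else 0) := by
    rw [Finset.sum_comm, Finset.sum_filter]
    refine Finset.sum_congr rfl fun y _ => ?_
    rw [Finset.sum_ite_eq]
    have : ((hw y : ℤ) = (N : ℤ) - k) ↔ (Finset.univ.filter fun i => y i ≠ 0)ᶜ ∈
        (Finset.univ : Finset (Fin N)).powersetCard k := by
      rw [Finset.mem_powersetCard, Finset.card_compl, Fintype.card_fin]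
      have : hw y ≤ N := by
        unfold hw
        simpa using Finset.card_le_univ (Finset.univ.filter fun i => y i ≠ 0)
      change _ ↔ _ ∧ N - hw y = k
      simp only [Finset.subset_univ, true_and]
      omega
    simp only [this]
  rw [h2]
  simp_rw [h1]
  have hm0 : (m : ℂ) ≠ 0 := by exact_mod_cast (by omega : m ≠ 0)
  set J := Finset.univ.filter fun i => ξ i ≠ 0 with hJ
  have hk2 := kap_eq (m := m) hk J
  have h3 : ∀ Z ∈ (Finset.univ : Finset (Fin N)).powersetCard k,
      ∏ i, (if i ∈ Z then (1 : ℂ) else if ξ i = 0 then (m : ℂ) else -1) =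
      (m : ℂ) ^ (N - k) * ((-(m : ℂ)⁻¹) ^ J.card * (-(m : ℂ)) ^ (Z ∩ J).card) := by
    intro Z hZ
    rw [Finset.mem_powersetCard] at hZ
    have e1 : (m : ℂ) ^ (N - k) = ∏ i, (if i ∈ Z then (1 : ℂ) else m) := by
      rw [Finset.prod_ite, Finset.prod_const_one, one_mul, Finset.prod_const]
      congr 1
      rw [Finset.filter_not, Finset.card_sdiff_of_subset (Finset.filter_subset _ _)]
      simp [hZ.2]
    have e2 : (-(m : ℂ)⁻¹) ^ J.card = ∏ i, (if i ∈ J then (-(m : ℂ)⁻¹) else 1) := by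
      simp
    have e3 : (-(m : ℂ)) ^ (Z ∩ J).card = ∏ i, (if i ∈ Z ∩ J then (-(m : ℂ)) else 1) := by
      simp [-Finset.mem_inter]
    rw [e1, e2, e3, ← Finset.prod_mul_distrib, ← Finset.prod_mul_distrib]
    refine Finset.prod_congr rfl fun i _ => ?_
    have hiJ : i ∈ J ↔ ξ i ≠ 0 := by simp [hJ]
    by_cases hZi : i ∈ Z <;> by_cases hξ : ξ i = 0 <;> simp [hZi, hiJ, hξ, hm0]
  rw [Finset.sum_congr rfl h3, ← Finset.mul_sum]
  have hk3 : ((N.choose k * kap m N k J.card : ℝ) : ℂ) =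
     ((∑ Z ∈ (Finset.univ : Finset (Fin N)).powersetCard k,
      (-(m : ℝ)⁻¹) ^ J.card * (-(m : ℝ)) ^ (Z ∩ J).card : ℝ) : ℂ) := by rw [hk2]
  push_cast at hk3
  rw [← hk3]
  change _ = _ * (kap m N k J.card : ℂ)
  push_cast
  ring

lemma kap_zero (m N k : ℕ) : kap m N k 0 = 1 := by
  simp [kap, eN]

lemma sphere_card {m N k : ℕ} (hm : 1 ≤ m) (hk : k ≤ N) :
    (Finset.univ.filter (fun y : Fin N → ZMod (m + 1) => (hw y : ℤ) = (N : ℤ) - k)).card =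
      N.choose k * m ^ (N - k) := by
  have h := sphere_sum hm hk (0 : Fin N → ZMod (m + 1))
  have h0 : hw (0 : Fin N → ZMod (m + 1)) = 0 := by simp [hw]
  rw [h0, kap_zero] at h
  have : ∀ y : Fin N → ZMod (m + 1), chF 0 y = 1 := by intro y; simp [chF]
  simp only [this, Finset.sum_const, nsmul_eq_mul, mul_one, Complex.ofReal_one] at h
  exact_mod_cast h

lemma hat_sigma {m N k : ℕ} (hm : 1 ≤ m) (hk : k ≤ N) (ξ : Fin N → ZMod (m + 1)) :
    hatF (sigmaC m N ((N : ℤ) - k)) ξ = (kap m N k (hw ξ) : ℂ) := by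
  unfold hatF sigmaC
  simp only [mul_ite, mul_zero]
  rw [← Finset.sum_filter, ← Finset.sum_mul, sphere_sum hm hk, sphere_card hm hk]
  have : ((N.choose k * m ^ (N - k) : ℕ) : ℂ) ≠ 0 := by
    have := Nat.choose_pos hk
    have : N.choose k * m ^ (N - k) ≠ 0 := by positivity
    exact_mod_cast this
  field_simp

/-! Bernstein matrix -/

def bM (N : ℕ) : Matrix (Fin (N + 1)) (Fin (N + 1)) ℝ := fun k l =>
  (N.choose l : ℝ) * ((k : ℝ) / N) ^ (l : ℕ) * (1 - (k : ℝ) / N) ^ (N - l)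

def qM (N : ℕ) : Matrix (Fin (N + 1)) (Fin (N + 1)) ℝ := 1 - bM N

lemma x_le_one {N : ℕ} (k : Fin (N + 1)) : (k : ℝ) / N ≤ 1 := by
  refine div_le_one_of_le₀ ?_ (by positivity)
  have : (k : ℕ) ≤ N := by omega
  exact_mod_cast this

lemma bM_nonneg {N : ℕ} (k l : Fin (N + 1)) : 0 ≤ bM N k l := by
  unfold bM
  have := x_le_one k
  have h : 0 ≤ 1 - (k : ℝ) / N := by linarith
  positivity

lemma bM_gen {N : ℕ} (k : Fin (N + 1)) (t : ℝ) :
    ∑ l, bM N k l * t ^ (l : ℕ) = ((k : ℝ) / N * t + (1 - (k : ℝ) / N)) ^ N := by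
  unfold bM
  rw [Fin.sum_univ_eq_sum_range (fun l : ℕ =>
    (N.choose l : ℝ) * ((k : ℝ) / N) ^ l * (1 - (k : ℝ) / N) ^ (N - l) * t ^ l), add_pow]
  refine Finset.sum_congr rfl fun l _ => ?_
  rw [mul_pow]; ring

lemma bM_sum {N : ℕ} (k : Fin (N + 1)) : ∑ l, bM N k l = 1 := by
  have := bM_gen k 1
  simpa using this

lemma bM_e {N i : ℕ} (hi : i ≤ N) (k : Fin (N + 1)) :
    ∑ l, bM N k l * eN N i l = ((k : ℝ) / N) ^ i := by
  unfold bM eN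
  rw [Fin.sum_univ_eq_sum_range (fun l : ℕ =>
    (N.choose l : ℝ) * ((k : ℝ) / N) ^ l * (1 - (k : ℝ) / N) ^ (N - l) *
      ((l.choose i : ℝ) / (N.choose i : ℝ)))]
  have hpos : (0 : ℝ) < N.choose i := by exact_mod_cast Nat.choose_pos hi
  generalize (k : ℝ) / N = x
  rw [show N + 1 = i + (N - i + 1) by omega, Finset.sum_range_add]
  rw [Finset.sum_eq_zero, zero_add]
  · have h := add_pow x (1 - x) (N - i)
    rw [add_sub_cancel, one_pow] at h
    refine Eq.trans ?_ (mul_one (x ^ i))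
    conv_rhs => rw [h]
    rw [Finset.mul_sum]
    refine Finset.sum_congr rfl fun l _ => ?_
    have h2 := Nat.choose_mul (n := N) (k := i + l) (s := i) (by omega)
    rw [show i + l - i = l by omega] at h2
    have h3 : (N.choose (i + l) : ℝ) * (i + l).choose i = N.choose i * (N - i).choose l := by
      exact_mod_cast h2
    rw [← Nat.sub_sub, pow_add]
    field_simp
    linear_combination (x ^ i * x ^ l * (1 - x) ^ (N - i - l)) * h3
  · intro l hl
    rw [Nat.choose_eq_zero_of_lt (Finset.mem_range.1 hl)]
    simp

lemma x_e {N l k : ℕ} (hl : l < N) :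
    (k : ℝ) / N * eN N l k = (1 - (l : ℝ) / N) * eN N (l + 1) k + (l : ℝ) / N * eN N l k := by
  unfold eN
  have hN : (0 : ℝ) < N := by exact_mod_cast (by omega : 0 < N)
  have hl0 : (0 : ℝ) < (N : ℝ) - l := by
    have : (l : ℝ) < N := by exact_mod_cast hl
    linarith
  have hp1 : (0 : ℝ) < N.choose l := by exact_mod_cast Nat.choose_pos hl.le
  have hp2 : (0 : ℝ) < N.choose (l + 1) := by exact_mod_cast Nat.choose_pos hl
  have h1 : (N.choose (l + 1) : ℝ) * (l + 1) = N.choose l * (N - l) := by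
    have := Nat.choose_succ_right_eq N l
    rw [← Nat.cast_sub hl.le]
    exact_mod_cast this
  have h2 : (k.choose (l + 1) : ℝ) * (l + 1) = k.choose l * (k - l) := by
    have := Nat.choose_succ_right_eq k l
    rcases Nat.lt_or_ge k l with h | h
    · rw [Nat.choose_eq_zero_of_lt h, Nat.choose_eq_zero_of_lt (by omega)]; simp
    rw [← Nat.cast_sub h]
    exact_mod_cast this
  have hl1 : (0 : ℝ) < (l : ℝ) + 1 := by positivity
  have e1 : (N.choose (l + 1) : ℝ) = N.choose l * (N - l) / (l + 1) := by
    rw [eq_div_iff hl1.ne', h1]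
  have e2 : (k.choose (l + 1) : ℝ) = k.choose l * (k - l) / (l + 1) := by
    rw [eq_div_iff hl1.ne', h2]
  rw [e1, e2]
  field_simp
  ring

lemma eN_nonneg (N i k : ℕ) : 0 ≤ eN N i k := by unfold eN; positivity

lemma eN_le_one {N k : ℕ} (i : ℕ) (hk : k ≤ N) : eN N i k ≤ 1 := by
  unfold eN
  refine div_le_one_of_le₀ ?_ (by positivity)
  exact_mod_cast Nat.choose_le_choose i hk

lemma eN_le_pow {N k i : ℕ} (hk : k ≤ N) (hi : i ≤ N) : eN N i k ≤ ((k : ℝ) / N) ^ i := by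
  induction i with
  | zero => simp [eN]
  | succ i ih =>
    have h := x_e (k := k) (show i < N by omega)
    have ih := ih (by omega)
    have hN : (0 : ℝ) < N := by exact_mod_cast (by omega : 0 < N)
    have h1 : eN N (i + 1) k ≤ eN N i k := by
      have hl0 : (0 : ℝ) < 1 - (i : ℝ) / N := by
        have : (i : ℝ) < N := by exact_mod_cast (by omega : i < N)
        rw [sub_pos, div_lt_one hN]; exact this
      have : (k : ℝ) / N ≤ 1 := div_le_one_of_le₀ (by exact_mod_cast hk) hN.le
      have h0 := eN_nonneg N i k
      have : (k : ℝ) / N * eN N i k ≤ eN N i k := mul_le_of_le_one_left h0 this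
      refine le_of_mul_le_mul_left ?_ hl0
      linarith
    have hx0 : 0 ≤ (k : ℝ) / N := by positivity
    have : eN N (i + 1) k ≤ (k : ℝ) / N * eN N i k := by
      rw [h]
      have : 0 ≤ (i : ℝ) / N := by positivity
      nlinarith
    rw [pow_succ']
    exact this.trans (mul_le_mul_of_nonneg_left ih hx0)

def inK (N d : ℕ) (c : ℝ) (v : Fin (N + 1) → ℝ) : Prop :=
  ∃ a : ℕ → ℝ, (∀ k, v k = ∑ i ∈ Finset.range (d + 1), a i * eN N i k) ∧
    ∑ i ∈ Finset.range (d + 1), |a i| ≤ c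

lemma inK_add {N d : ℕ} {c c' : ℝ} {v v' : Fin (N + 1) → ℝ} (h : inK N d c v)
    (h' : inK N d c' v') : inK N d (c + c') (fun k => v k + v' k) := by
  obtain ⟨a, h1, h2⟩ := h
  obtain ⟨a', h1', h2'⟩ := h'
  refine ⟨fun i => a i + a' i, fun k => ?_, ?_⟩
  · beta_reduce
    rw [h1, h1', ← Finset.sum_add_distrib]
    exact Finset.sum_congr rfl fun i _ => by ring
  · refine le_trans ?_ (add_le_add h2 h2')
    rw [← Finset.sum_add_distrib]
    exact Finset.sum_le_sum fun i _ => abs_add_le _ _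

lemma inK_smul {N d : ℕ} {c : ℝ} {v : Fin (N + 1) → ℝ} (t : ℝ) (h : inK N d c v) :
    inK N d (|t| * c) (fun k => t * v k) := by
  obtain ⟨a, h1, h2⟩ := h
  refine ⟨fun i => t * a i, fun k => ?_, ?_⟩
  · beta_reduce
    rw [h1, Finset.mul_sum]
    exact Finset.sum_congr rfl fun i _ => by ring
  · simp_rw [abs_mul]
    rw [← Finset.mul_sum]
    exact mul_le_mul_of_nonneg_left h2 (abs_nonneg _)

lemma inK_mono {N d d' : ℕ} {c c' : ℝ} {v : Fin (N + 1) → ℝ} (h : inK N d c v)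
    (hd : d ≤ d') (hc : c ≤ c') : inK N d' c' v := by
  obtain ⟨a, h1, h2⟩ := h
  have hs : Finset.range (d + 1) ⊆ Finset.range (d' + 1) := Finset.range_mono (by omega)
  refine ⟨fun i => if i ∈ Finset.range (d + 1) then a i else 0, fun k => ?_, ?_⟩
  · rw [h1, ← Finset.sum_subset hs]
    · exact Finset.sum_congr rfl fun i hi => by beta_reduce; rw [if_pos hi]
    · intro i _ hi; beta_reduce; rw [if_neg hi, zero_mul]
  · rw [← Finset.sum_subset hs]
    · refine le_trans (le_of_eq ?_) (h2.trans hc)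
      exact Finset.sum_congr rfl fun i hi => by beta_reduce; rw [if_pos hi]
    · intro i _ hi; beta_reduce; rw [if_neg hi, abs_zero]

lemma inK_sum {N d : ℕ} {c : ℝ} (s : Finset ℕ) (a : ℕ → ℝ) (w : ℕ → Fin (N + 1) → ℝ)
    (h : ∀ i ∈ s, inK N d c (w i)) :
    inK N d ((∑ i ∈ s, |a i|) * c) (fun k => ∑ i ∈ s, a i * w i k) := by
  induction s using Finset.induction_on with
  | empty => exact ⟨fun _ => 0, fun k => by simp, by simp⟩
  | insert i s hi ih =>
    simp only [Finset.sum_insert hi, add_mul]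
    exact inK_add (inK_smul _ (h i (Finset.mem_insert_self _ _)))
      (ih fun j hj => h j (Finset.mem_insert_of_mem hj))

lemma inK_e (N i : ℕ) : inK N i 1 (fun k => eN N i k) := by
  refine ⟨fun j => if j = i then 1 else 0, fun k => ?_, ?_⟩
  · simp
  · rw [Finset.sum_eq_single i] <;> simp +contextual

lemma inK_xe {N l : ℕ} (hl : l < N) : inK N (l + 1) 1 (fun k => (k : ℝ) / N * eN N l k) := by
  have h := inK_add (inK_smul (1 - (l : ℝ) / N) (inK_e N (l + 1)))
    (inK_smul ((l : ℝ) / N) (inK_mono (inK_e N l) (Nat.le_succ l) le_rfl))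
  have hl1 : (l : ℝ) / N ≤ 1 := div_le_one_of_le₀ (by exact_mod_cast hl.le) (by positivity)
  have hl0 : 0 ≤ (l : ℝ) / N := by positivity
  have e : (fun k : Fin (N + 1) => (k : ℝ) / N * eN N l k) =
      fun k : Fin (N + 1) => (1 - (l : ℝ) / N) * eN N (l + 1) k + (l : ℝ) / N * eN N l k := by
    funext k; exact x_e hl
  rw [e]
  refine inK_mono h le_rfl ?_
  rw [abs_of_nonneg hl0, abs_of_nonneg (by linarith)]
  linarith

lemma inK_pow {N i : ℕ} (hi : i ≤ N) :
    inK N i ((i : ℝ) ^ 2 / N) (fun k => ((k : ℝ) / N) ^ i - eN N i k) := by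
  induction i with
  | zero => exact ⟨fun _ => 0, fun k => by simp [eN], by simp⟩
  | succ i ih =>
    obtain ⟨a, h1, h2⟩ := ih (by omega)
    have hs := inK_sum (N := N) (d := i + 1) (c := 1) (Finset.range (i + 1)) a
      (fun l k => (k : ℝ) / N * eN N l k) (by
        intro l hl
        rw [Finset.mem_range] at hl
        exact inK_mono (inK_xe (by omega)) (by omega) le_rfl)
    have h3 := inK_smul ((i : ℝ) / N) (inK_mono (inK_e N i) (Nat.le_succ i) le_rfl)
    have h4 := inK_smul (-((i : ℝ) / N)) (inK_e N (i + 1))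
    have h5 := inK_add hs (inK_add h3 h4)
    have hN : (0 : ℝ) < N := by exact_mod_cast (by omega : 0 < N)
    have hi0 : 0 ≤ (i : ℝ) / N := by positivity
    have e : (fun k : Fin (N + 1) => ((k : ℝ) / N) ^ (i + 1) - eN N (i + 1) k) =
        fun k : Fin (N + 1) => (∑ l ∈ Finset.range (i + 1), a l * ((k : ℝ) / N * eN N l k)) +
        ((i : ℝ) / N * eN N i k + -((i : ℝ) / N) * eN N (i + 1) k) := by
      funext k
      have hx := x_e (k := k) (show i < N by omega)
      have h1k := h1 k
      beta_reduce at h1k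
      have : ∑ l ∈ Finset.range (i + 1), a l * ((k : ℝ) / N * eN N l k) =
          (k : ℝ) / N * (((k : ℝ) / N) ^ i - eN N i k) := by
        rw [h1k, Finset.mul_sum]
        exact Finset.sum_congr rfl fun l _ => by ring
      rw [this, pow_succ]
      linear_combination hx
    rw [e]
    refine inK_mono h5 le_rfl ?_
    rw [abs_neg, abs_of_nonneg hi0]
    push_cast
    have : ((i : ℝ) + 1) ^ 2 / N = (i : ℝ) ^ 2 / N + 2 * (i / N) + 1 / N := by
      field_simp
      ring
    have h1N : 0 < 1 / (N : ℝ) := by positivity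
    linarith

lemma inK_q {N d : ℕ} (hd : d ≤ N) {c : ℝ} {v : Fin (N + 1) → ℝ} (h : inK N d c v) :
    inK N d (c * ((d : ℝ) ^ 2 / N)) ((qM N).mulVec v) := by
  obtain ⟨a, h1, h2⟩ := h
  have hs := inK_sum (N := N) (d := d) (c := (d : ℝ) ^ 2 / N) (Finset.range (d + 1)) (fun i => - a i)
      (fun i k => ((k : ℝ) / N) ^ i - eN N i k) (by
        intro l hl
        rw [Finset.mem_range] at hl
        refine inK_mono (inK_pow (by omega)) (by omega) ?_
        have : (l : ℝ) ≤ d := by exact_mod_cast (by omega : l ≤ d)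
        gcongr)
  have e : (qM N).mulVec v = fun k : Fin (N + 1) =>
      ∑ i ∈ Finset.range (d + 1), - a i * (((k : ℝ) / N) ^ i - eN N i k) := by
    funext k
    unfold qM
    rw [Matrix.sub_mulVec, Matrix.one_mulVec, Pi.sub_apply, h1 k]
    have : ((bM N).mulVec v) k = ∑ i ∈ Finset.range (d + 1), a i * ((k : ℝ) / N) ^ i := by
      change ∑ l, bM N k l * v l = _
      simp_rw [h1, Finset.mul_sum]
      rw [Finset.sum_comm]
      refine Finset.sum_congr rfl fun i hi => ?_
      rw [Finset.mem_range] at hi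
      rw [← bM_e (by omega), Finset.mul_sum]
      exact Finset.sum_congr rfl fun l _ => by ring
    rw [this, ← Finset.sum_sub_distrib]
    exact Finset.sum_congr rfl fun i _ => by ring
  rw [e]
  refine inK_mono hs le_rfl ?_
  simp_rw [abs_neg]
  gcongr

lemma inK_qpow {N d : ℕ} (hd : d ≤ N) {c : ℝ} {v : Fin (N + 1) → ℝ} (h : inK N d c v) (L : ℕ) :
    inK N d (c * ((d : ℝ) ^ 2 / N) ^ L) ((qM N ^ L).mulVec v) := by
  induction L with
  | zero => simpa using h
  | succ L ih =>
    rw [pow_succ' (qM N), ← Matrix.mulVec_mulVec, pow_succ, ← mul_assoc]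
    exact inK_q hd ih

lemma inK_abs {N d : ℕ} {c : ℝ} {v : Fin (N + 1) → ℝ} (h : inK N d c v) (k) : |v k| ≤ c := by
  obtain ⟨a, h1, h2⟩ := h
  rw [h1]
  refine (Finset.abs_sum_le_sum_abs _ _).trans (le_trans (Finset.sum_le_sum fun i _ => ?_) h2)
  rw [abs_mul, abs_of_nonneg (eN_nonneg _ _ _)]
  exact mul_le_of_le_one_right (abs_nonneg _) (eN_le_one _ (by omega))

lemma inK_kap {m N j : ℕ} (hm : 2 ≤ m) : inK N j (2 ^ j) (fun k => kap m N k j) := by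
  refine ⟨fun i => (-(m : ℝ)⁻¹) ^ j * ((j.choose i : ℝ) * (-(m : ℝ) - 1) ^ i), fun k => ?_, ?_⟩
  · unfold kap
    beta_reduce
    rw [Finset.mul_sum]
    exact Finset.sum_congr rfl fun i _ => by ring
  · have hm' : (2 : ℝ) ≤ m := by exact_mod_cast hm
    have e : ∀ i, |(-(m : ℝ)⁻¹) ^ j * ((j.choose i : ℝ) * (-(m : ℝ) - 1) ^ i)| =
        ((m : ℝ)⁻¹) ^ j * (((m : ℝ) + 1) ^ i * 1 ^ (j - i) * (j.choose i : ℝ)) := by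
      intro i
      rw [abs_mul, abs_mul, abs_pow, abs_pow, abs_neg, abs_inv, Nat.abs_cast, Nat.abs_cast,
        show -(m : ℝ) - 1 = -((m : ℝ) + 1) by ring, abs_neg, abs_of_nonneg (by positivity)]
      ring
    simp_rw [e]
    rw [← Finset.mul_sum, ← add_pow, ← mul_pow]
    refine pow_le_pow_left₀ (by positivity) ?_ _
    rw [inv_mul_le_iff₀ (by linarith)]
    linarith

lemma small_j {m N j : ℕ} (hm : 2 ≤ m) (hj : j ≤ N) (L : ℕ) (k) :
    |((qM N ^ L).mulVec (fun k => kap m N k j)) k| ≤ 2 ^ j * ((j : ℝ) ^ 2 / N) ^ L :=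
  inK_abs (inK_qpow hj (inK_kap hm) L) k

lemma row_mul {n : Type*} [Fintype n] (A B : Matrix n n ℝ) {a b : ℝ} (hb0 : 0 ≤ b)
    (ha : ∀ k, ∑ l, |A k l| ≤ a) (hb : ∀ k, ∑ l, |B k l| ≤ b) (k : n) :
    ∑ l, |(A * B) k l| ≤ a * b := by
  calc _ ≤ ∑ l, ∑ i, |A k i| * |B i l| := by
        refine Finset.sum_le_sum fun l _ => ?_
        rw [Matrix.mul_apply]
        refine (Finset.abs_sum_le_sum_abs _ _).trans (le_of_eq ?_)
        exact Finset.sum_congr rfl fun i _ => abs_mul _ _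
    _ = ∑ i, |A k i| * ∑ l, |B i l| := by
        rw [Finset.sum_comm]
        simp_rw [Finset.mul_sum]
    _ ≤ ∑ i, |A k i| * b := Finset.sum_le_sum fun i _ =>
        mul_le_mul_of_nonneg_left (hb i) (abs_nonneg _)
    _ = (∑ i, |A k i|) * b := by rw [Finset.sum_mul]
    _ ≤ _ := mul_le_mul_of_nonneg_right (ha k) hb0

lemma one_row {N : ℕ} (k : Fin (N + 1)) :
    ∑ l, |(1 : Matrix (Fin (N + 1)) (Fin (N + 1)) ℝ) k l| ≤ 1 := by
  rw [Finset.sum_eq_single k]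
  · simp
  · intro l _ h; simp [Matrix.one_apply_ne h.symm]
  · simp

lemma q_row {N : ℕ} (k : Fin (N + 1)) : ∑ l, |qM N k l| ≤ 2 := by
  calc _ ≤ ∑ l, (|(1 : Matrix (Fin (N + 1)) (Fin (N + 1)) ℝ) k l| + bM N k l) := by
        refine Finset.sum_le_sum fun l _ => ?_
        unfold qM
        rw [Matrix.sub_apply]
        refine (abs_sub _ _).trans (le_of_eq ?_)
        rw [abs_of_nonneg (bM_nonneg k l)]
    _ ≤ 2 := by
        rw [Finset.sum_add_distrib, bM_sum]
        have := one_row k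
        linarith

lemma qpow_row {N : ℕ} (L : ℕ) (k : Fin (N + 1)) : ∑ l, |(qM N ^ L) k l| ≤ 2 ^ L := by
  induction L generalizing k with
  | zero => simpa using one_row k
  | succ L ih =>
    rw [pow_succ, pow_succ]
    exact row_mul _ _ (by norm_num) ih q_row k

def cM (N L : ℕ) : Matrix (Fin (N + 1)) (Fin (N + 1)) ℝ := ∑ i ∈ Finset.range L, qM N ^ i

lemma cM_mul (N L : ℕ) : cM N L * bM N = 1 - qM N ^ L := by
  have h := geom_sum_mul_neg (qM N) L
  have : (1 : Matrix (Fin (N + 1)) (Fin (N + 1)) ℝ) - qM N = bM N := by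
    unfold qM; rw [sub_sub_cancel]
  rw [this] at h
  exact h

lemma cM_row {N : ℕ} (L : ℕ) (k : Fin (N + 1)) : ∑ l, |cM N L k l| ≤ 2 ^ L := by
  induction L with
  | zero => simp [cM]
  | succ L ih =>
    have e : cM N (L + 1) = cM N L + qM N ^ L := by unfold cM; rw [Finset.sum_range_succ]
    rw [e]
    calc _ ≤ ∑ l, (|cM N L k l| + |(qM N ^ L) k l|) :=
          Finset.sum_le_sum fun l _ => by rw [Matrix.add_apply]; exact abs_add_le _ _
      _ ≤ _ := by
          rw [Finset.sum_add_distrib, pow_succ]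
          have := qpow_row (N := N) L k
          linarith

lemma exp_step {N : ℕ} (hN : 1 ≤ N) {v : Fin (N + 1) → ℝ} {R u : ℝ} (hu : 0 ≤ u) (hu1 : u < 1)
    (hR : 0 ≤ R) (h : ∀ k : Fin (N + 1), |v k| ≤ R * Real.exp (u * k)) (k : Fin (N + 1)) :
    |((qM N).mulVec v) k| ≤ 2 * R * Real.exp (u / (1 - u) * k) := by
  have hN' : (0 : ℝ) < N := by exact_mod_cast hN
  have h1 : |((bM N).mulVec v) k| ≤ R * Real.exp (u / (1 - u) * k) := by
    have hx0 : 0 ≤ (k : ℝ) / N := by positivity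
    have hx1 := x_le_one k
    have heu : Real.exp u ≤ 1 / (1 - u) := by
      rw [le_div_iff₀ (by linarith)]
      have := Real.add_one_le_exp (-u)
      calc Real.exp u * (1 - u) ≤ Real.exp u * Real.exp (-u) := by
            gcongr; linarith
        _ = 1 := by rw [← Real.exp_add]; simp
    have heu2 : Real.exp u - 1 ≤ u / (1 - u) := by
      have : u / (1 - u) = 1 / (1 - u) - 1 := by
        have : (1 - u) ≠ 0 := by linarith
        field_simp; ring
      linarith
    calc _ = |∑ l, bM N k l * v l| := rfl
      _ ≤ ∑ l, bM N k l * (R * Real.exp u ^ (l : ℕ)) := by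
          refine (Finset.abs_sum_le_sum_abs _ _).trans (Finset.sum_le_sum fun l _ => ?_)
          rw [abs_mul, abs_of_nonneg (bM_nonneg k l)]
          refine mul_le_mul_of_nonneg_left ((h l).trans (le_of_eq ?_)) (bM_nonneg k l)
          rw [← Real.exp_nat_mul, mul_comm u]
      _ = R * ∑ l, bM N k l * Real.exp u ^ (l : ℕ) := by
          rw [Finset.mul_sum]
          exact Finset.sum_congr rfl fun l _ => by ring
      _ = R * ((k : ℝ) / N * Real.exp u + (1 - (k : ℝ) / N)) ^ N := by rw [bM_gen]
      _ ≤ R * (Real.exp ((k : ℝ) / N * (u / (1 - u)))) ^ N := by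
          refine mul_le_mul_of_nonneg_left (pow_le_pow_left₀ ?_ ?_ _) hR
          · have := Real.exp_pos u
            have : 0 ≤ 1 - (k : ℝ) / N := by linarith
            positivity
          · have := Real.add_one_le_exp ((k : ℝ) / N * (u / (1 - u)))
            nlinarith
      _ = _ := by
          rw [← Real.exp_nat_mul]
          congr 2
          field_simp
  unfold qM
  rw [Matrix.sub_mulVec, Matrix.one_mulVec, Pi.sub_apply]
  have h2 : |v k| ≤ R * Real.exp (u / (1 - u) * k) := by
    refine (h k).trans ?_
    have : u ≤ u / (1 - u) := by
      rw [le_div_iff₀ (by linarith)]; nlinarith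
    gcongr
  have := abs_sub (v k) (((bM N).mulVec v) k)
  linarith

lemma exp_iter {N : ℕ} (hN : 1 ≤ N) {v : Fin (N + 1) → ℝ} {R u : ℝ} (hu : 0 ≤ u)
    (hR : 0 ≤ R) (h : ∀ k : Fin (N + 1), |v k| ≤ R * Real.exp (u * k)) (L : ℕ) (hL : L * u < 1)
    (k : Fin (N + 1)) :
    |((qM N ^ L).mulVec v) k| ≤ 2 ^ L * R * Real.exp (u / (1 - L * u) * k) := by
  induction L generalizing k with
  | zero => simpa using h k
  | succ L ih =>
    push_cast at hL
    have hL0 : 0 < 1 - L * u := by nlinarith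
    have hL1 : 0 < 1 - (L + 1) * u := by linarith
    have ih := ih (by linarith)
    have hs := exp_step hN (u := u / (1 - L * u)) (by positivity)
      (by rw [div_lt_one hL0]; linarith) (by positivity : 0 ≤ 2 ^ L * R) ih k
    rw [pow_succ' (qM N), ← Matrix.mulVec_mulVec]
    refine hs.trans (le_of_eq ?_)
    have : u / (1 - L * u) / (1 - u / (1 - L * u)) = u / (1 - (L + 1 : ℕ) * u) := by
      push_cast
      have e : 1 - u / (1 - L * u) = (1 - (L + 1) * u) / (1 - L * u) := by
        rw [eq_div_iff hL0.ne', sub_mul, div_mul_cancel₀ _ hL0.ne']; ring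
      rw [e, div_div_div_cancel_right₀ hL0.ne']
    rw [this]
    ring

lemma kap_le {m N k j : ℕ} (hm : 2 ≤ m) (hk : k ≤ N) (hj : j ≤ N) :
    |kap m N k j| ≤ ((m : ℝ)⁻¹ * (1 + (m - 1) * ((k : ℝ) / N))) ^ j := by
  have hm' : (2 : ℝ) ≤ m := by exact_mod_cast hm
  refine (kap_abs hk hj).trans ?_
  rw [mul_pow, add_comm (1 : ℝ), add_pow]
  refine mul_le_mul_of_nonneg_left (Finset.sum_le_sum fun i hi => ?_) (by positivity)
  rw [Finset.mem_range] at hi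
  have := eN_le_pow (i := i) hk (by omega)
  have h1 : (0 : ℝ) ≤ m - 1 := by linarith
  calc _ ≤ (j.choose i : ℝ) * ((m : ℝ) - 1) ^ i * ((k : ℝ) / N) ^ i := by gcongr
    _ = _ := by rw [mul_pow]; ring

lemma y_le_one {m N k : ℕ} (hm : 2 ≤ m) (hk : k ≤ N) :
    (m : ℝ)⁻¹ * (1 + (m - 1) * ((k : ℝ) / N)) ≤ 1 := by
  have hm' : (2 : ℝ) ≤ m := by exact_mod_cast hm
  have : (k : ℝ) / N ≤ 1 := div_le_one_of_le₀ (by exact_mod_cast hk) (by positivity)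
  rw [inv_mul_le_iff₀ (by linarith)]
  nlinarith

lemma y_nonneg {m N k : ℕ} (hm : 2 ≤ m) :
    0 ≤ (m : ℝ)⁻¹ * (1 + (m - 1) * ((k : ℝ) / N)) := by
  have hm' : (2 : ℝ) ≤ m := by exact_mod_cast hm
  have h1 : (0 : ℝ) ≤ m - 1 := by linarith
  positivity

lemma triv_j {m N j : ℕ} (hm : 2 ≤ m) (hj : j ≤ N) (L : ℕ) (k) :
    |((qM N ^ L).mulVec (fun k => kap m N k j)) k| ≤ 2 ^ L := by
  refine le_trans ?_ (qpow_row L k)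
  change |∑ l, (qM N ^ L) k l * kap m N l j| ≤ _
  refine (Finset.abs_sum_le_sum_abs _ _).trans (Finset.sum_le_sum fun l _ => ?_)
  rw [abs_mul]
  refine mul_le_of_le_one_right (abs_nonneg _) ?_
  have hl : (l : ℕ) ≤ N := by omega
  exact (kap_le hm hl hj).trans (pow_le_one₀ (y_nonneg hm) (y_le_one hm hl))

lemma large_j {m N j J : ℕ} (hm : 2 ≤ m) (hN : 1 ≤ N) (hj : j ≤ N) (hJ : J ≤ j) (L : ℕ)
    (hL : 3 * L * (m - 1) * J ≤ (N : ℝ)) (k : Fin (N + 1)) (hk : (k : ℕ) ≤ N / (m + 1)) :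
    |((qM N ^ L).mulVec (fun k => kap m N k j)) k| ≤ 2 ^ L * Real.exp (-(J : ℝ) / 6) := by
  have hm' : (2 : ℝ) ≤ m := by exact_mod_cast hm
  have hN' : (0 : ℝ) < N := by exact_mod_cast hN
  have h1 : (0 : ℝ) ≤ m - 1 := by linarith
  set u : ℝ := (m - 1) * J / N with hu
  have hu0 : 0 ≤ u := by positivity
  have hLu : L * u ≤ 1 / 3 := by
    rw [hu, ← mul_div_assoc, div_le_div_iff₀ hN' (by norm_num)]
    linarith
  have hb : ∀ k : Fin (N + 1), |kap m N k j| ≤ ((m : ℝ)⁻¹) ^ J * Real.exp (u * k) := by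
    intro k
    have hk : (k : ℕ) ≤ N := by omega
    refine (kap_le hm hk hj).trans ((pow_le_pow_of_le_one (y_nonneg hm) (y_le_one hm hk) hJ).trans ?_)
    rw [mul_pow]
    refine mul_le_mul_of_nonneg_left ?_ (by positivity)
    calc _ ≤ (Real.exp ((m - 1) * ((k : ℝ) / N))) ^ J := by
          refine pow_le_pow_left₀ (by positivity) ?_ _
          rw [add_comm]
          exact Real.add_one_le_exp _
      _ = _ := by
          rw [← Real.exp_nat_mul, hu]
          congr 1
          field_simp
  refine (exp_iter hN hu0 (by positivity) hb L (by linarith) k).trans ?_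
  rw [mul_assoc]
  refine mul_le_mul_of_nonneg_left ?_ (by positivity)
  have hlog : 2 * ((m : ℝ) - 1) / (m + 1) ≤ Real.log m := by
    have := Real.le_log_one_add_of_nonneg h1
    rw [show (m : ℝ) - 1 + 2 = m + 1 by ring, show (1 : ℝ) + (m - 1) = m by ring] at this
    exact this
  have hmJ : ((m : ℝ)⁻¹) ^ J = Real.exp (-(J * Real.log m)) := by
    rw [Real.exp_neg, Real.exp_nat_mul, Real.exp_log (by linarith), inv_pow]
  rw [hmJ, ← Real.exp_add]
  refine Real.exp_le_exp.2 ?_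
  have hk' : (k : ℝ) * (m + 1) ≤ N := by
    have := Nat.div_mul_le_self N (m + 1)
    have : (k : ℕ) * (m + 1) ≤ N := (Nat.mul_le_mul_right _ hk).trans this
    exact_mod_cast this
  have e1 : u / (1 - L * u) ≤ 3 / 2 * u := by
    rw [div_le_iff₀ (by linarith)]
    nlinarith
  have e2 : u * k ≤ (m - 1) / (m + 1) * J := by
    rw [hu, div_mul_eq_mul_div, div_mul_eq_mul_div, div_le_div_iff₀ hN' (by linarith)]
    have : 0 ≤ (m - 1 : ℝ) * J := by positivity
    nlinarith
  have e3 : (1 : ℝ) / 3 ≤ (m - 1) / (m + 1) := by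
    rw [div_le_div_iff₀ (by norm_num) (by linarith)]; linarith
  have e4 : u / (1 - L * u) * k ≤ 3 / 2 * ((m - 1) / (m + 1) * J) := by
    calc _ ≤ 3 / 2 * u * k := by gcongr
      _ ≤ _ := by linarith
  have hJ0 : (0 : ℝ) ≤ J := by positivity
  have e5 := mul_le_mul_of_nonneg_left hlog hJ0
  have e6 := mul_le_mul_of_nonneg_left e3 hJ0
  rw [mul_div_assoc] at e5
  linarith

lemma param (m : ℕ) (hm : 2 ≤ m) (M : ℕ) (hM : 1 ≤ M) : ∃ (L : ℕ) (C : ℝ), 0 < C ∧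
    ∀ N : ℕ, 1 ≤ N → ∀ j ≤ N, ∀ k : Fin (N + 1), (k : ℕ) ≤ N / (m + 1) →
    |((qM N ^ L).mulVec (fun k => kap m N k j)) k| ≤ C / (N : ℝ) ^ M := by
  have hm' : (2 : ℝ) ≤ m := by exact_mod_cast hm
  have hM' : (1 : ℝ) ≤ M := by exact_mod_cast hM
  set S : ℝ := 1050 * M ^ 2 * m with hS
  have hS1 : 1 ≤ S := by
    have : (1 : ℝ) ≤ M ^ 2 := one_le_pow₀ hM'
    rw [hS]; nlinarith
  refine ⟨14 * M, Real.exp 1 * (625 * (M : ℝ) ^ 2) ^ (14 * M) + 2 ^ (14 * M) +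
    2 ^ (14 * M) * S ^ (4 * M), by positivity, ?_⟩
  intro N hN j hj k hk
  have hN' : (1 : ℝ) ≤ N := by exact_mod_cast hN
  have hN0 : (0 : ℝ) < N := by linarith
  obtain ⟨s, hs1, hs4⟩ : ∃ s : ℝ, 1 ≤ s ∧ s ^ 4 = N := by
    refine ⟨√√N, ?_, ?_⟩
    · rw [Real.one_le_sqrt, Real.one_le_sqrt]; exact hN'
    · rw [show 4 = 2 * 2 by norm_num, pow_mul, Real.sq_sqrt (by positivity), Real.sq_sqrt hN0.le]
  have hs0 : 0 < s := by linarith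
  rw [add_div, add_div]
  have p1 : 0 ≤ Real.exp 1 * (625 * (M : ℝ) ^ 2) ^ (14 * M) / (N : ℝ) ^ M := by positivity
  have p2 : 0 ≤ (2 : ℝ) ^ (14 * M) / (N : ℝ) ^ M := by positivity
  have p3 : 0 ≤ 2 ^ (14 * M) * S ^ (4 * M) / (N : ℝ) ^ M := by positivity
  set J := ⌈6 * M * Real.log N⌉₊ with hJ
  have hlog0 : 0 ≤ Real.log N := Real.log_nonneg hN'
  have hlog : Real.log N ≤ 4 * s := by
    rw [← hs4, Real.log_pow]
    have := Real.log_le_sub_one_of_pos hs0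
    push_cast; linarith
  have hJ1 : (J : ℝ) ≤ 6 * M * Real.log N + 1 := (Nat.ceil_lt_add_one (by positivity)).le
  have hJ2 : (J : ℝ) ≤ 25 * M * s := by
    have : 6 * M * Real.log N ≤ 6 * M * (4 * s) := by gcongr
    have : 1 ≤ M * s := by nlinarith
    linarith
  have hJ3 : 6 * M * Real.log N ≤ J := Nat.le_ceil _
  rcases Nat.lt_or_ge j J with hjJ | hjJ
  · refine (small_j hm hj (14 * M) k).trans ?_
    refine le_trans ?_ (show Real.exp 1 * (625 * (M : ℝ) ^ 2) ^ (14 * M) / (N : ℝ) ^ M ≤ _ by linarith)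
    have hjJ' : (j : ℝ) ≤ J := by exact_mod_cast hjJ.le
    have a1 : (2 : ℝ) ^ j ≤ Real.exp 1 * (N : ℝ) ^ (6 * M) := by
      calc (2 : ℝ) ^ j ≤ (Real.exp 1) ^ j := by
            refine pow_le_pow_left₀ (by norm_num) ?_ _
            have := Real.add_one_le_exp 1
            linarith
        _ = Real.exp j := by rw [← Real.exp_nat_mul, mul_one]
        _ ≤ Real.exp (1 + (6 * M : ℕ) * Real.log N) := by
            refine Real.exp_le_exp.2 ?_
            push_cast
            linarith
        _ = _ := by rw [Real.exp_add, Real.exp_nat_mul, Real.exp_log hN0]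
    have a2 : (j : ℝ) ^ 2 / N ≤ 625 * (M : ℝ) ^ 2 / s ^ 2 := by
      rw [← hs4, div_le_div_iff₀ (by positivity) (by positivity)]
      have : (j : ℝ) ^ 2 ≤ (25 * M * s) ^ 2 := pow_le_pow_left₀ (by positivity) (hjJ'.trans hJ2) 2
      nlinarith [pow_pos hs0 2]
    calc _ ≤ (Real.exp 1 * (N : ℝ) ^ (6 * M)) * (625 * (M : ℝ) ^ 2 / s ^ 2) ^ (14 * M) := by gcongr
      _ = _ := by
        rw [div_pow]
        have e : (s ^ 2) ^ (14 * M) = (N : ℝ) ^ (6 * M) * (N : ℝ) ^ M := by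
          rw [← hs4]; ring
        rw [e]
        field_simp
  · rcases le_or_gt S s with hSs | hSs
    · have hc : 3 * (14 * M : ℕ) * (m - 1) * J ≤ (N : ℝ) := by
        push_cast
        rw [← hs4]
        calc 3 * (14 * (M : ℝ)) * (m - 1) * J ≤ 3 * (14 * (M : ℝ)) * m * (25 * M * s) := by
              gcongr
              linarith
          _ = S * s := by rw [hS]; ring
          _ ≤ s * s := by gcongr
          _ = s ^ 2 := by ring
          _ ≤ s ^ 4 := pow_le_pow_right₀ hs1 (by norm_num)
      refine (large_j hm hN hj hjJ (14 * M) hc k hk).trans ?_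
      refine le_trans ?_ (show (2 : ℝ) ^ (14 * M) / (N : ℝ) ^ M ≤ _ by linarith)
      rw [div_eq_mul_inv]
      refine mul_le_mul_of_nonneg_left ?_ (by positivity)
      calc Real.exp (-(J : ℝ) / 6) ≤ Real.exp (-(M * Real.log N)) := by
            refine Real.exp_le_exp.2 ?_
            linarith
        _ = _ := by rw [Real.exp_neg, Real.exp_nat_mul, Real.exp_log hN0]
    · refine (triv_j hm hj (14 * M) k).trans ?_
      refine le_trans ?_ (show 2 ^ (14 * M) * S ^ (4 * M) / (N : ℝ) ^ M ≤ _ by linarith)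
      rw [le_div_iff₀ (by positivity)]
      refine mul_le_mul_of_nonneg_left ?_ (by positivity)
      rw [pow_mul, ← hs4]
      gcongr

/-! Assembly -/

def sgR (m N k : ℕ) (x : Fin N → ZMod (m + 1)) : ℝ := ‖sigmaC m N ((N : ℤ) - k) x‖

lemma hw_le {m N : ℕ} (y : Fin N → ZMod (m + 1)) : hw y ≤ N := by
  unfold hw
  simpa using Finset.card_le_univ (Finset.univ.filter fun i => y i ≠ 0)

lemma sgR_eq {m N k : ℕ} (hm : 1 ≤ m) (hk : k ≤ N) (x : Fin N → ZMod (m + 1)) :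
    sgR m N k x = if hw x = N - k then ((N.choose k * m ^ (N - k) : ℕ) : ℝ)⁻¹ else 0 := by
  unfold sgR sigmaC
  rw [sphere_card hm hk]
  have : ((hw x : ℤ) = (N : ℤ) - k) ↔ hw x = N - k := by omega
  simp only [this]
  split_ifs
  · rw [norm_inv, Complex.norm_natCast]
  · simp

lemma sgR_coe {m N k : ℕ} (x : Fin N → ZMod (m + 1)) :
    sigmaC m N ((N : ℤ) - k) x = (sgR m N k x : ℂ) := by
  unfold sgR sigmaC
  split_ifs
  · rw [norm_inv, Complex.norm_natCast]; simp
  · simp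

lemma sgR_nonneg {m N k : ℕ} (x : Fin N → ZMod (m + 1)) : 0 ≤ sgR m N k x := norm_nonneg _

lemma sgR_sum {m N k : ℕ} (hm : 1 ≤ m) (hk : k ≤ N) : ∑ x, sgR m N k x = 1 := by
  have h := hat_sigma hm hk (0 : Fin N → ZMod (m + 1))
  have h0 : hw (0 : Fin N → ZMod (m + 1)) = 0 := by simp [hw]
  have h1 : ∀ y : Fin N → ZMod (m + 1), chF 0 y = 1 := by intro y; simp [chF]
  unfold hatF at h
  rw [h0, kap_zero] at h
  simp only [h1, one_mul, sgR_coe] at h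
  exact_mod_cast h

lemma conv_l1 {m N : ℕ} (g f : (Fin N → ZMod (m + 1)) → ℂ) :
    ∑ x, ‖convC g f x‖ ≤ (∑ x, ‖g x‖) * ∑ x, ‖f x‖ := by
  calc _ ≤ ∑ x, ∑ y, ‖g y‖ * ‖f (x - y)‖ := by
        refine Finset.sum_le_sum fun x _ => ?_
        refine (norm_sum_le _ _).trans (le_of_eq ?_)
        exact Finset.sum_congr rfl fun y _ => norm_mul _ _
    _ = ∑ y, ‖g y‖ * ∑ x, ‖f x‖ := by
        rw [Finset.sum_comm]
        refine Finset.sum_congr rfl fun y _ => ?_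
        rw [← Finset.mul_sum]
        congr 1
        exact Equiv.sum_comp (Equiv.subRight y) (fun x => ‖f x‖)
    _ = _ := by rw [Finset.sum_mul]

def dK (m N L : ℕ) (k : Fin (N + 1)) (y : Fin N → ZMod (m + 1)) : ℂ :=
  ∑ l : Fin (N + 1), ((qM N ^ L) k l : ℂ) * sigmaC m N ((N : ℤ) - (l : ℕ)) y

lemma dK_l1 {m N L : ℕ} (hm : 1 ≤ m) (k : Fin (N + 1)) : ∑ y, ‖dK m N L k y‖ ≤ 2 ^ L := by
  calc _ ≤ ∑ y, ∑ l : Fin (N + 1), |(qM N ^ L) k l| * sgR m N l y := by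
        refine Finset.sum_le_sum fun y _ => ?_
        refine (norm_sum_le _ _).trans (le_of_eq ?_)
        refine Finset.sum_congr rfl fun l _ => ?_
        rw [norm_mul, Complex.norm_real, Real.norm_eq_abs]; rfl
    _ = ∑ l : Fin (N + 1), |(qM N ^ L) k l| := by
        rw [Finset.sum_comm]
        refine Finset.sum_congr rfl fun l _ => ?_
        rw [← Finset.mul_sum, sgR_sum hm (by omega), mul_one]
    _ ≤ _ := qpow_row L k

lemma dK_hat {m N L : ℕ} (hm : 1 ≤ m) (k : Fin (N + 1)) (ξ : Fin N → ZMod (m + 1)) :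
    hatF (dK m N L k) ξ = (((qM N ^ L).mulVec (fun k => kap m N k (hw ξ))) k : ℝ) := by
  unfold dK hatF
  simp_rw [Finset.mul_sum]
  rw [Finset.sum_comm]
  change _ = ((∑ l : Fin (N + 1), (qM N ^ L) k l * kap m N l (hw ξ) : ℝ) : ℂ)
  rw [Complex.ofReal_sum]
  refine Finset.sum_congr rfl fun l _ => ?_
  rw [Complex.ofReal_mul, ← hat_sigma hm (by omega)]
  unfold hatF
  rw [Finset.mul_sum]
  exact Finset.sum_congr rfl fun y _ => by ring

def convL {m N : ℕ} (g : (Fin N → ZMod (m + 1)) → ℂ) :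
    ((Fin N → ZMod (m + 1)) → ℂ) →ₗ[ℂ] ((Fin N → ZMod (m + 1)) → ℂ) where
  toFun := convC g
  map_add' f f' := by
    funext x
    simp [convC, mul_add, Finset.sum_add_distrib]
  map_smul' c f := by
    funext x
    simp only [convC, Pi.smul_apply, smul_eq_mul, RingHom.id_apply, Finset.mul_sum]
    exact Finset.sum_congr rfl fun y _ => by ring

lemma dK_lp {m N L : ℕ} (hm : 1 ≤ m) (k : Fin (N + 1)) {ε p : ℝ} (hε : 0 ≤ ε)
    (h : ∀ j ≤ N, |((qM N ^ L).mulVec (fun k => kap m N k j)) k| ≤ ε)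
    (hp : 1 < p) (hp2 : p ≤ 2) (f : (Fin N → ZMod (m + 1)) → ℂ) :
    ∑ x, ‖convC (dK m N L k) f x‖ ^ p ≤
      (((2 : ℝ) ^ L) ^ (2 / p - 1) * ε ^ (2 - 2 / p)) ^ p * ∑ x, ‖f x‖ ^ p := by
  refine interp (convL (dK m N L k)) (by positivity) hε ?_ ?_ hp hp2 f
  · intro f
    refine (conv_l1 _ f).trans ?_
    exact mul_le_mul_of_nonneg_right (dK_l1 hm k) (Finset.sum_nonneg fun _ _ => norm_nonneg _)
  · intro f
    refine l2_bound _ f fun ξ => ?_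
    rw [dK_hat hm, Complex.norm_real, Real.norm_eq_abs]
    exact h _ (hw_le ξ)

def wS (m : ℕ) (s : ℝ) (z : ZMod (m + 1)) : ℝ := if z = 0 then s else (1 - s) / m
def v1 (m : ℕ) (z : ZMod (m + 1)) : ℝ := if z = 0 then 0 else (m : ℝ)⁻¹
def v0 (m : ℕ) (z : ZMod (m + 1)) : ℝ := if z = 0 then 1 else 0

lemma v1_nonneg (m : ℕ) (z) : 0 ≤ v1 m z := by unfold v1; split_ifs <;> positivity
lemma v0_nonneg (m : ℕ) (z) : 0 ≤ v0 m z := by unfold v0; split_ifs <;> positivity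
lemma v0_sum (m : ℕ) : ∑ z, v0 m z = 1 := by simp [v0]
lemma v1_sum (m : ℕ) (hm : 1 ≤ m) : ∑ z, v1 m z = 1 := by
  have : ∀ z, v1 m z = (m : ℝ)⁻¹ - if z = 0 then (m : ℝ)⁻¹ else 0 := by
    intro z; unfold v1; split_ifs <;> simp
  simp_rw [this]
  have hm0 : (m : ℝ) ≠ 0 := by exact_mod_cast (by omega : m ≠ 0)
  rw [Finset.sum_sub_distrib]
  simp [ZMod.card]
  field_simp
  ring

lemma bS_prod {m N : ℕ} (hm : 1 ≤ m) (l : Fin (N + 1)) (y : Fin N → ZMod (m + 1)) :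
    ∑ k : Fin (N + 1), bM N l k * sgR m N k y = ∏ i, wS m ((l : ℝ) / N) (y i) := by
  have hy := hw_le y
  have hm0 : (m : ℝ) ≠ 0 := by exact_mod_cast (by omega : m ≠ 0)
  rw [Finset.sum_eq_single (⟨N - hw y, by omega⟩ : Fin (N + 1))]
  · rw [sgR_eq hm (by simp)]
    rw [if_pos (by simp only []; omega)]
    unfold bM wS
    rw [Finset.prod_ite, Finset.prod_const, Finset.prod_const]
    have e1 : (Finset.univ.filter fun i => ¬ y i = 0).card = hw y := rfl
    have e2 : (Finset.univ.filter fun i => y i = 0).card = N - hw y := by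
      have := Finset.card_filter_add_card_filter_not (s := Finset.univ) (fun i => y i = 0)
      rw [e1] at this
      simp at this
      omega
    rw [e1, e2]
    simp only [show N - (N - hw y) = hw y by omega]
    have hc : (0 : ℝ) < N.choose (N - hw y) := by exact_mod_cast Nat.choose_pos (by omega)
    push_cast
    rw [div_pow (1 - (l : ℝ) / N)]
    generalize (l : ℝ) / N = x
    field_simp
  · intro k _ hk
    rw [sgR_eq hm (by omega), if_neg, mul_zero]
    intro h
    apply hk
    ext
    simp only []
    omega
  · simp

def UU {m N : ℕ} (f : (Fin N → ZMod (m + 1)) → ℝ) (x : Fin N → ZMod (m + 1)) : ℝ :=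
  ∑ y : Fin N → ZMod (m + 1), (∏ i, v1 m (y i)) * mM f (x - y) +
  ∑ y : Fin N → ZMod (m + 1), (∏ i, v0 m (y i)) * mM f (x - y)

lemma wS_le {m N : ℕ} (hm : 1 ≤ m) (f : (Fin N → ZMod (m + 1)) → ℝ) (hf : ∀ x, 0 ≤ f x)
    {s : ℝ} (hs0 : 0 ≤ s) (hs1 : s ≤ 1) (x) :
    ∑ y : Fin N → ZMod (m + 1), (∏ i, wS m s (y i)) * f (x - y) ≤ UU f x := by
  have hm0 : (0 : ℝ) < m := by exact_mod_cast (by omega : 0 < m)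
  have n1 : 0 ≤ ∑ y : Fin N → ZMod (m + 1), (∏ i, v1 m (y i)) * mM f (x - y) :=
    Finset.sum_nonneg fun y _ => mul_nonneg (Finset.prod_nonneg fun i _ => v1_nonneg _ _)
      (mM_nonneg f hf _)
  have n0 : 0 ≤ ∑ y : Fin N → ZMod (m + 1), (∏ i, v0 m (y i)) * mM f (x - y) :=
    Finset.sum_nonneg fun y _ => mul_nonneg (Finset.prod_nonneg fun i _ => v0_nonneg _ _)
      (mM_nonneg f hf _)
  unfold UU
  rcases le_or_gt ((m + 1) * s) 1 with h | h
  · refine le_trans (prod_conv_le f hf (v1 m) (wS m s) (v1_nonneg m) (v1_sum m hm)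
      (a := (m + 1) * s) (b := 1 - (m + 1) * s) (by positivity) (by linarith) (by ring) ?_ x)
      (by linarith)
    intro z
    unfold wS v1
    split_ifs
    · field_simp; ring
    · field_simp; ring
  · refine le_trans (prod_conv_le f hf (v0 m) (wS m s) (v0_nonneg m) (v0_sum m)
      (a := (m + 1) * (1 - s) / m) (b := ((m + 1) * s - 1) / m)
      (div_nonneg (mul_nonneg (by positivity) (by linarith)) hm0.le)
      (div_nonneg (by linarith) hm0.le) (by field_simp; ring) ?_ x)
      (by linarith)
    intro z
    unfold wS v0
    split_ifs
    · field_simp; ring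
    · field_simp; ring

lemma add_rpow_le {a b p : ℝ} (ha : 0 ≤ a) (hb : 0 ≤ b) (hp : 1 < p) :
    (a + b) ^ p ≤ 2 ^ p * (a ^ p + b ^ p) := by
  have hp0 : 0 ≤ p := by linarith
  have pa : 0 ≤ a ^ p := by positivity
  have pb : 0 ≤ b ^ p := by positivity
  have p2 : (0 : ℝ) ≤ 2 ^ p := by positivity
  rcases le_total a b with h | h
  · calc (a + b) ^ p ≤ (2 * b) ^ p := Real.rpow_le_rpow (by positivity) (by linarith) hp0
      _ = 2 ^ p * b ^ p := Real.mul_rpow (by norm_num) hb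
      _ ≤ _ := by gcongr; linarith
  · calc (a + b) ^ p ≤ (2 * a) ^ p := Real.rpow_le_rpow (by positivity) (by linarith) hp0
      _ = 2 ^ p * a ^ p := Real.mul_rpow (by norm_num) ha
      _ ≤ _ := by gcongr; linarith

lemma UU_nonneg {m N : ℕ} (f : (Fin N → ZMod (m + 1)) → ℝ) (hf : ∀ x, 0 ≤ f x) (x) :
    0 ≤ UU f x := by
  unfold UU
  refine add_nonneg (Finset.sum_nonneg fun y _ => ?_) (Finset.sum_nonneg fun y _ => ?_)
  · exact mul_nonneg (Finset.prod_nonneg fun i _ => v1_nonneg _ _) (mM_nonneg f hf _)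
  · exact mul_nonneg (Finset.prod_nonneg fun i _ => v0_nonneg _ _) (mM_nonneg f hf _)

lemma UU_lp {m N : ℕ} (hm : 1 ≤ m) (f : (Fin N → ZMod (m + 1)) → ℝ) (hf : ∀ x, 0 ≤ f x)
    {p : ℝ} (hp : 1 < p) :
    ∑ x, UU f x ^ p ≤ 2 ^ p * (2 * (p / (p - 1)) ^ p) * ∑ x, f x ^ p := by
  have key : ∀ v : ZMod (m + 1) → ℝ, (∀ z, 0 ≤ v z) → ∑ z, v z = 1 →
      ∑ x, (∑ y : Fin N → ZMod (m + 1), (∏ i, v (y i)) * mM f (x - y)) ^ p ≤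
      (p / (p - 1)) ^ p * ∑ x, f x ^ p := fun v hv hv1 =>
    (conv_jensen (mM f) (mM_nonneg f hf) (fun y => ∏ i, v (y i))
      (fun y => Finset.prod_nonneg fun i _ => hv _) (prod_sum_one v hv1) hp.le).trans
      (mM_bound f hf hp)
  have k1 := key _ (v1_nonneg m) (v1_sum m hm)
  have k0 := key _ (v0_nonneg m) (v0_sum m)
  calc _ ≤ ∑ x, 2 ^ p * ((∑ y : Fin N → ZMod (m + 1), (∏ i, v1 m (y i)) * mM f (x - y)) ^ p +
        (∑ y : Fin N → ZMod (m + 1), (∏ i, v0 m (y i)) * mM f (x - y)) ^ p) := by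
        refine Finset.sum_le_sum fun x _ => ?_
        refine add_rpow_le (Finset.sum_nonneg fun y _ => ?_) (Finset.sum_nonneg fun y _ => ?_) hp
        · exact mul_nonneg (Finset.prod_nonneg fun i _ => v1_nonneg _ _) (mM_nonneg f hf _)
        · exact mul_nonneg (Finset.prod_nonneg fun i _ => v0_nonneg _ _) (mM_nonneg f hf _)
    _ ≤ _ := by
        rw [← Finset.mul_sum, Finset.sum_add_distrib, mul_assoc]
        refine mul_le_mul_of_nonneg_left ?_ (by positivity)
        linarith

lemma point {m N L : ℕ} (hm : 1 ≤ m) (k : Fin (N + 1)) (f : (Fin N → ZMod (m + 1)) → ℂ) (x) :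
    ‖convC (sigmaC m N ((N : ℤ) - (k : ℕ))) f x‖ ≤
      ‖convC (dK m N L k) f x‖ + 2 ^ L * UU (fun x => ‖f x‖) x := by
  set A : Fin (N + 1) → ℂ := fun l => convC (sigmaC m N ((N : ℤ) - (l : ℕ))) f x with hA
  set T : Fin (N + 1) → ℂ := fun l => ∑ l', (bM N l l' : ℂ) * A l' with hT
  have hD : convC (dK m N L k) f x = ∑ l, ((qM N ^ L) k l : ℂ) * A l := by
    unfold convC dK
    simp_rw [Finset.sum_mul]
    rw [Finset.sum_comm]
    refine Finset.sum_congr rfl fun l _ => ?_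
    simp only [hA, convC]
    rw [Finset.mul_sum]
    exact Finset.sum_congr rfl fun y _ => by ring
  have hdec : A k = convC (dK m N L k) f x + ∑ l, (cM N L k l : ℂ) * T l := by
    have h1 : ∑ l, (cM N L k l : ℂ) * T l = ∑ l', ((cM N L * bM N) k l' : ℂ) * A l' := by
      simp only [hT, Matrix.mul_apply, Complex.ofReal_sum, Complex.ofReal_mul]
      simp_rw [Finset.mul_sum, Finset.sum_mul]
      rw [Finset.sum_comm]
      exact Finset.sum_congr rfl fun l _ => Finset.sum_congr rfl fun l' _ => by ring
    rw [hD, h1, cM_mul, ← Finset.sum_add_distrib]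
    rw [Finset.sum_eq_single k]
    · rw [Matrix.sub_apply, Matrix.one_apply_eq]; push_cast; ring
    · intro l _ h
      rw [Matrix.sub_apply, Matrix.one_apply_ne h.symm]; push_cast; ring
    · simp
  have hTb : ∀ l, ‖T l‖ ≤ UU (fun x => ‖f x‖) x := by
    intro l
    refine le_trans ?_ (wS_le hm (fun x => ‖f x‖) (fun _ => norm_nonneg _)
      (s := (l : ℝ) / N) (by positivity) (x_le_one l) x)
    have e : T l = ∑ y, ((∏ i, wS m ((l : ℝ) / N) (y i) : ℝ) : ℂ) * f (x - y) := by
      simp only [hT, hA, convC]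
      simp_rw [← bS_prod hm, Finset.mul_sum, Complex.ofReal_sum, Finset.sum_mul]
      rw [Finset.sum_comm]
      refine Finset.sum_congr rfl fun y _ => Finset.sum_congr rfl fun l' _ => ?_
      rw [sgR_coe]; push_cast; ring
    rw [e]
    refine (norm_sum_le _ _).trans (le_of_eq ?_)
    refine Finset.sum_congr rfl fun y _ => ?_
    rw [norm_mul, Complex.norm_real, Real.norm_of_nonneg]
    rw [← bS_prod hm]
    exact Finset.sum_nonneg fun l' _ => mul_nonneg (bM_nonneg _ _) (sgR_nonneg _)
  change ‖A k‖ ≤ _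
  rw [hdec]
  refine (norm_add_le _ _).trans (add_le_add le_rfl ?_)
  have hU := UU_nonneg (fun x => ‖f x‖) (fun _ => norm_nonneg _) x
  calc _ ≤ ∑ l, |cM N L k l| * UU (fun x => ‖f x‖) x := by
        refine (norm_sum_le _ _).trans (Finset.sum_le_sum fun l _ => ?_)
        rw [norm_mul, Complex.norm_real, Real.norm_eq_abs]
        exact mul_le_mul_of_nonneg_left (hTb l) (abs_nonneg _)
    _ ≤ _ := by
        rw [← Finset.sum_mul]
        exact mul_le_mul_of_nonneg_right (cM_row L k) hU

lemma distantMax_nonneg {m N : ℕ} (f : (Fin N → ZMod (m + 1)) → ℂ) (x) :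
    0 ≤ distantMax m N f x := by
  unfold distantMax
  exact (norm_nonneg _).trans (Finset.le_sup' (fun k : ℕ =>
    ‖convC (sigmaC m N ((N : ℤ) - k)) f x‖) (Finset.mem_range.2 (Nat.succ_pos _)))

lemma base (m : ℕ) (hm : 2 ≤ m) (p : ℝ) (hp : 1 < p) (hp2 : p ≤ 2) :
    ∃ C : ℝ, 0 ≤ C ∧ ∀ N : ℕ, 1 ≤ N → ∀ f : (Fin N → ZMod (m + 1)) → ℂ,
      ∑ x, distantMax m N f x ^ p ≤ C * ∑ x, ‖f x‖ ^ p := by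
  obtain ⟨M, hM⟩ := exists_nat_ge (1 / (2 * p - 2))
  have hq : 0 < 2 * p - 2 := by linarith
  have hMp : 1 ≤ M * (2 * p - 2) := by rwa [div_le_iff₀ hq] at hM
  have hM1 : 1 ≤ M := by
    rcases Nat.eq_zero_or_pos M with h | h
    · rw [h] at hMp; norm_num at hMp
    · exact h
  obtain ⟨L, C0, hC0, H⟩ := param m hm M hM1
  have hm1 : 1 ≤ m := by omega
  set B : ℝ := (((2 : ℝ) ^ L) ^ (2 / p - 1)) ^ p * C0 ^ (2 * p - 2) with hB
  have hB0 : 0 ≤ B := by positivity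
  have hpp : 0 < p / (p - 1) := div_pos (by linarith) (by linarith)
  refine ⟨2 ^ p * (2 * B + ((2 : ℝ) ^ L) ^ p * (2 ^ p * (2 * (p / (p - 1)) ^ p))),
    by positivity, ?_⟩
  intro N hN f
  have hN1 : (1 : ℝ) ≤ N := by exact_mod_cast hN
  have hN0 : (0 : ℝ) < N := by linarith
  set Φ := ∑ x, ‖f x‖ ^ p with hΦ
  have hΦ0 : 0 ≤ Φ := Finset.sum_nonneg fun _ _ => by positivity
  set U := UU (fun x => ‖f x‖) with hU
  set S : Finset (Fin (N + 1)) := Finset.univ.filter fun k => (k : ℕ) ≤ N / (m + 1) with hS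
  have hUn := UU_nonneg (fun x => ‖f x‖) (fun _ => norm_nonneg _)
  have hpt : ∀ x, distantMax m N f x ^ p ≤
      2 ^ p * (∑ k ∈ S, ‖convC (dK m N L k) f x‖ ^ p + ((2 : ℝ) ^ L) ^ p * U x ^ p) := by
    intro x
    obtain ⟨k, hk, he⟩ := Finset.exists_mem_eq_sup' (Finset.nonempty_range_add_one (n := N / (m + 1)))
      (fun k : ℕ => ‖convC (sigmaC m N ((N : ℤ) - k)) f x‖)
    rw [Finset.mem_range] at hk
    have hkN : k < N + 1 := by
      have := Nat.div_le_self N (m + 1)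
      omega
    have hpo := point (L := L) hm1 (⟨k, hkN⟩ : Fin (N + 1)) f x
    have he' : distantMax m N f x = ‖convC (sigmaC m N ((N : ℤ) - k)) f x‖ := he
    have hle : distantMax m N f x ≤ ‖convC (dK m N L ⟨k, hkN⟩) f x‖ + 2 ^ L * U x := by
      rw [he']; exact hpo
    have hkS : (⟨k, hkN⟩ : Fin (N + 1)) ∈ S := by
      simp only [hS, Finset.mem_filter, Finset.mem_univ, true_and]; omega
    calc _ ≤ (‖convC (dK m N L ⟨k, hkN⟩) f x‖ + 2 ^ L * U x) ^ p :=
          Real.rpow_le_rpow (distantMax_nonneg f x) hle (by linarith)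
      _ ≤ 2 ^ p * (‖convC (dK m N L ⟨k, hkN⟩) f x‖ ^ p + (2 ^ L * U x) ^ p) :=
          add_rpow_le (norm_nonneg _) (mul_nonneg (by positivity) (hUn x)) hp
      _ ≤ _ := by
          rw [Real.mul_rpow (by positivity) (hUn x)]
          refine mul_le_mul_of_nonneg_left (add_le_add ?_ le_rfl) (by positivity)
          exact Finset.single_le_sum (f := fun k => ‖convC (dK m N L k) f x‖ ^ p)
            (fun _ _ => by positivity) hkS
  have hk : ∀ k ∈ S, ∑ x, ‖convC (dK m N L k) f x‖ ^ p ≤ B / N * Φ := by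
    intro k hk
    simp only [hS, Finset.mem_filter, Finset.mem_univ, true_and] at hk
    refine (dK_lp hm1 k (ε := C0 / (N : ℝ) ^ M) (by positivity)
      (fun j hj => H N hN j hj k hk) hp hp2 f).trans ?_
    refine mul_le_mul_of_nonneg_right ?_ hΦ0
    rw [Real.mul_rpow (by positivity) (by positivity), hB, mul_div_assoc]
    refine mul_le_mul_of_nonneg_left ?_ (by positivity)
    rw [← Real.rpow_mul (by positivity)]
    have : (2 - 2 / p) * p = 2 * p - 2 := by field_simp
    rw [this, Real.div_rpow hC0.le (by positivity)]
    refine div_le_div_of_nonneg_left (by positivity) hN0 ?_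
    rw [← Real.rpow_natCast, ← Real.rpow_mul hN0.le]
    calc (N : ℝ) = (N : ℝ) ^ (1 : ℝ) := (Real.rpow_one _).symm
      _ ≤ _ := Real.rpow_le_rpow_of_exponent_le hN1 hMp
  have hScard : (S.card : ℝ) ≤ 2 * N := by
    have : S.card ≤ N + 1 := by simpa using Finset.card_le_univ S
    have : (S.card : ℝ) ≤ N + 1 := by exact_mod_cast this
    linarith
  have hsum : ∑ x, ∑ k ∈ S, ‖convC (dK m N L k) f x‖ ^ p ≤ 2 * B * Φ := by
    rw [Finset.sum_comm]
    refine (Finset.sum_le_sum hk).trans ?_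
    rw [Finset.sum_const, nsmul_eq_mul]
    calc _ ≤ 2 * N * (B / N * Φ) := by gcongr
      _ = _ := by field_simp
  have hU2 := UU_lp hm1 (fun x => ‖f x‖) (fun _ => norm_nonneg _) hp
  calc _ ≤ ∑ x, 2 ^ p * (∑ k ∈ S, ‖convC (dK m N L k) f x‖ ^ p + ((2 : ℝ) ^ L) ^ p * U x ^ p) :=
        Finset.sum_le_sum fun x _ => hpt x
    _ = 2 ^ p * (∑ x, ∑ k ∈ S, ‖convC (dK m N L k) f x‖ ^ p +
        ((2 : ℝ) ^ L) ^ p * ∑ x, U x ^ p) := by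
        rw [← Finset.mul_sum, Finset.sum_add_distrib, ← Finset.mul_sum]
    _ ≤ 2 ^ p * (2 * B * Φ + ((2 : ℝ) ^ L) ^ p * (2 ^ p * (2 * (p / (p - 1)) ^ p) * Φ)) := by
        gcongr
    _ = _ := by ring

lemma full (m : ℕ) (hm : 2 ≤ m) (p : ℝ) (hp : 1 < p) :
    ∃ C : ℝ, 0 ≤ C ∧ ∀ N : ℕ, 1 ≤ N → ∀ f : (Fin N → ZMod (m + 1)) → ℂ,
      ∑ x, distantMax m N f x ^ p ≤ C * ∑ x, ‖f x‖ ^ p := by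
  rcases le_or_gt p 2 with h2 | h2
  · exact base m hm p hp h2
  obtain ⟨C, hC, H⟩ := base m hm 2 (by norm_num) le_rfl
  refine ⟨C, hC, fun N hN f => ?_⟩
  set r : ℝ := p / 2 with hr
  have hr1 : 1 ≤ r := by rw [hr]; linarith
  have hr0 : 0 ≤ r := by linarith
  have hrp : r * 2 = p := by rw [hr]; ring
  have h := H N hN (fun x => ((‖f x‖ ^ r : ℝ) : ℂ))
  have e1 : ∀ x, ‖((‖f x‖ ^ r : ℝ) : ℂ)‖ ^ (2 : ℝ) = ‖f x‖ ^ p := by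
    intro x
    rw [Complex.norm_real, Real.norm_of_nonneg (by positivity), ← Real.rpow_mul (norm_nonneg _), hrp]
  simp_rw [e1] at h
  refine le_trans (Finset.sum_le_sum fun x _ => ?_) h
  obtain ⟨k, hk, he⟩ := Finset.exists_mem_eq_sup' (Finset.nonempty_range_add_one (n := N / (m + 1)))
      (fun k : ℕ => ‖convC (sigmaC m N ((N : ℤ) - k)) f x‖)
  have he' : distantMax m N f x = ‖convC (sigmaC m N ((N : ℤ) - k)) f x‖ := he
  have hk' := hk
  rw [Finset.mem_range] at hk
  have hkN : k ≤ N := by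
    have := Nat.div_le_self N (m + 1)
    omega
  rw [← hrp, Real.rpow_mul (distantMax_nonneg f x)]
  refine Real.rpow_le_rpow (Real.rpow_nonneg (distantMax_nonneg f x) _) ?_ (by norm_num)
  refine le_trans ?_ (Finset.le_sup' (fun k : ℕ => ‖convC (sigmaC m N ((N : ℤ) - k))
    (fun x => ((‖f x‖ ^ r : ℝ) : ℂ)) x‖) hk')
  rw [he']
  have e2 : convC (sigmaC m N ((N : ℤ) - k)) (fun x => ((‖f x‖ ^ r : ℝ) : ℂ)) x =
      ((∑ y, sgR m N k y * ‖f (x - y)‖ ^ r : ℝ) : ℂ) := by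
    unfold convC
    rw [Complex.ofReal_sum]
    exact Finset.sum_congr rfl fun y _ => by rw [sgR_coe, Complex.ofReal_mul]
  beta_reduce
  rw [e2, Complex.norm_real, Real.norm_of_nonneg (Finset.sum_nonneg fun y _ =>
    mul_nonneg (sgR_nonneg _) (by positivity))]
  refine le_trans ?_ (Real.rpow_arith_mean_le_arith_mean_rpow Finset.univ (fun y => sgR m N k y)
    (fun y => ‖f (x - y)‖) (fun y _ => sgR_nonneg y) (sgR_sum (by omega) hkN)
    (fun _ _ => norm_nonneg _) hr1)
  refine Real.rpow_le_rpow (norm_nonneg _) ?_ hr0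
  refine (norm_sum_le _ _).trans (le_of_eq ?_)
  exact Finset.sum_congr rfl fun y _ => norm_mul _ _

theorem statement16 (m : ℕ) (hm : 2 ≤ m) (p : ℝ) (hp : 1 < p) :
    ∃ C : ℝ, ∀ N : ℕ, 1 ≤ N → ∀ f : (Fin N → ZMod (m + 1)) → ℂ,
      (∑ x, distantMax m N f x ^ p) ^ (1 / p) ≤ C * (∑ x, ‖f x‖ ^ p) ^ (1 / p) := by
  obtain ⟨C, hC, H⟩ := full m hm p hp
  have hp0 : 0 < p := by linarith
  refine ⟨C ^ (1 / p), fun N hN f => ?_⟩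
  rw [← Real.mul_rpow hC (Finset.sum_nonneg fun _ _ => by positivity)]
  exact Real.rpow_le_rpow (Finset.sum_nonneg fun x _ =>
    Real.rpow_nonneg (distantMax_nonneg f x) _) (H N hN f) (by positivity)
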